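/- arXiv:1710.10660 — 2 statements merged into one kernel-verified Lean document; each statement's English description precedes it below -/
import Mathlib

section
/- For every entangling E of a permutation π, the map Λ(E) (making each σ ∈ E a part and each remaining element a singleton part) yields d(E) = k − Σ_{σ∈E}(|σ|−1) parts. Moreover there is a sign vector S ∈ {+,−}^{|Λ(E)|} such that the signed partition (Λ(E), S) is unique; consequently d(π) ≤ u(π). -/
/-- Minimum value of `π` on the consecutive subsequence given by position interval `σ`. -/
noncomputable def pmin (π : ℕ → ℕ) (σ : ℕ × ℕ) : ℕ := sInf (π '' Set.Icc σ.1 σ.2)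

/-- Maximum value of `π` on the consecutive subsequence given by position interval `σ`. -/
noncomputable def pmax (π : ℕ → ℕ) (σ : ℕ × ℕ) : ℕ := sSup (π '' Set.Icc σ.1 σ.2)

/-- `σ'` is shadowed with respect to `σ` (both consecutive subsequences of `π`). -/
def Shadowed (π : ℕ → ℕ) (σ σ' : ℕ × ℕ) : Prop :=
  ∃ m M, m ∈ Set.Icc σ'.1 σ'.2 ∧ M ∈ Set.Icc σ'.1 σ'.2 ∧
    (∀ c ∈ Set.Icc σ'.1 σ'.2, π m ≤ π c ∧ π c ≤ π M) ∧
    ((σ.2 < σ'.1 ∧ m < M ∧ π M < π (σ'.1 - 1)) ∨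
     (σ.2 < σ'.1 ∧ M < m ∧ π (σ'.1 - 1) < π m) ∨
     (σ'.2 < σ.1 ∧ m < M ∧ π (σ'.2 + 1) < π m) ∨
     (σ'.2 < σ.1 ∧ M < m ∧ π M < π (σ'.2 + 1)))

/-- Minimum of the minima of parts `E 0, …, E (j-1)`. -/
noncomputable def prevMin (π : ℕ → ℕ) (E : List (ℕ × ℕ)) (j : ℕ) : ℕ :=
  sInf {v | ∃ i < j, v = pmin π (E.getD i (0, 0))}

/-- Maximum of the maxima of parts `E 0, …, E (j-1)`. -/
noncomputable def prevMax (π : ℕ → ℕ) (E : List (ℕ × ℕ)) (j : ℕ) : ℕ :=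
  sSup {v | ∃ i < j, v = pmax π (E.getD i (0, 0))}

/-- `E` is an entangling of the permutation `π` of length `k`: a list of pairwise disjoint
consecutive subsequences (given by position intervals, each of length ≥ 2) satisfying the
nesting, non-shadowing and covering conditions. -/
structure IsEntangling (k : ℕ) (π : ℕ → ℕ) (E : List (ℕ × ℕ)) : Prop where
  nonempty : E ≠ []
  valid : ∀ σ ∈ E, 1 ≤ σ.1 ∧ σ.1 < σ.2 ∧ σ.2 ≤ k
  disj : List.Pairwise (fun σ τ => Disjoint (Set.Icc σ.1 σ.2) (Set.Icc τ.1 τ.2)) E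
  nest : ∀ j, 1 ≤ j → j < E.length →
    ((E.getD 0 (0, 0)).2 < (E.getD j (0, 0)).1 ∧
      prevMin π E j < π (E.getD j (0, 0)).1 ∧ π (E.getD j (0, 0)).1 < prevMax π E j) ∨
    ((E.getD j (0, 0)).2 < (E.getD 0 (0, 0)).1 ∧
      prevMin π E j < π (E.getD j (0, 0)).2 ∧ π (E.getD j (0, 0)).2 < prevMax π E j)
  notShadowed : ∀ j, 1 ≤ j → j < E.length →
    ¬ Shadowed π (E.getD 0 (0, 0)) (E.getD j (0, 0))
  cover : ∀ v, 1 ≤ v → v ≤ k → ∃ σ ∈ E, pmin π σ ≤ v ∧ v ≤ pmax π σ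

/-- `d(E) = k - Σ_{σ ∈ E} (|σ| - 1)`, the number of parts of the partition `Λ(E)`. -/
def dval (k : ℕ) (E : List (ℕ × ℕ)) : ℕ := k - (E.map fun σ => σ.2 - σ.1).sum

/-- `idx` is a `π`-copy in `f` (entries indexed over `[1, k²]`). -/
def IsPatternAt (k : ℕ) (π : ℕ → ℕ) (f : ℕ → ℝ) (idx : ℕ → ℕ) : Prop :=
  StrictMonoOn idx (Set.Icc 1 k) ∧ (∀ a ∈ Set.Icc 1 k, idx a ∈ Set.Icc 1 (k * k)) ∧
  ∀ a ∈ Set.Icc 1 k, ∀ b ∈ Set.Icc 1 k, (f (idx a) < f (idx b) ↔ π a < π b)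

/-- A trivial `π`-copy: all its values lie in a common open unit interval `(m, m+1)`. -/
def TrivialCopy (k : ℕ) (f : ℕ → ℝ) (idx : ℕ → ℕ) : Prop :=
  ∃ m < k, ∀ a ∈ Set.Icc 1 k, (m : ℝ) < f (idx a) ∧ f (idx a) < (m : ℝ) + 1

/-- The defining equations of the sequence `f_P : [k²] → ℝ` associated with the signed
partition with boundaries `r` and signs `s`. -/
def FPEq (k u : ℕ) (π : ℕ → ℕ) (r : ℕ → ℕ) (s : ℕ → Bool) (f : ℕ → ℝ) : Prop :=
  ∀ i, 1 ≤ i → i ≤ u → ∀ m < k, ∀ j, 1 ≤ j → j ≤ r i - r (i - 1) →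
    f (r (i - 1) * k + m * (r i - r (i - 1)) + j) =
      (if s i then (m : ℝ) else (k : ℝ) - 1 - (m : ℝ)) + (π (r (i - 1) + j) : ℝ) / (2 * k)

/-- `(r, s)` is a signed partition of `π` of size `u`. -/
def IsSignedPartition (k u : ℕ) (π : ℕ → ℕ) (r : ℕ → ℕ) (s : ℕ → Bool) : Prop :=
  r 0 = 0 ∧ r u = k ∧ StrictMonoOn r (Set.Icc 0 u) ∧
  ∀ i, 1 ≤ i → i ≤ u → 1 < r i - r (i - 1) →
    ∀ a ∈ Set.Icc (r (i - 1) + 1) (r i), ∀ b ∈ Set.Icc (r (i - 1) + 1) (r i),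
      (∀ c ∈ Set.Icc (r (i - 1) + 1) (r i), π a ≤ π c ∧ π c ≤ π b) →
      (s i = false ↔ a < b)

/-- A unique signed partition: the associated sequence `f_P` has only trivial `π`-copies. -/
def UniqueSP (k u : ℕ) (π : ℕ → ℕ) (r : ℕ → ℕ) (s : ℕ → Bool) : Prop :=
  IsSignedPartition k u π r s ∧
  ∀ f : ℕ → ℝ, FPEq k u π r s f → ∀ idx, IsPatternAt k π f idx → TrivialCopy k f idx

/-- The entangling number `d(π)`. -/
noncomputable def entNum (k : ℕ) (π : ℕ → ℕ) : ℕ :=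
  sSup {d | ∃ E, IsEntangling k π E ∧ d = dval k E}

/-- The unique signed partition number `u(π)`. -/
noncomputable def uspn (k : ℕ) (π : ℕ → ℕ) : ℕ :=
  sSup {u | ∃ r s, UniqueSP k u π r s}

/-!
Fix an entangling `E` with first member `σ₁`, and give every part of `Λ(E)` a sign that its extreme
values go against. In a `π`-copy inside `f_P`, entries taken from one block and ordered against the
sign of the block lie in the same copy of the corresponding part. Since no member of `E` is shadowed
with respect to `σ₁`, each part can be extended by one entry towards `σ₁` and still, if it were
taken from one block, would lie in one copy, which is too short to hold it. Induction from the two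
ends of `π` towards `σ₁` therefore shows that the part of the `π`-copy at a part right (left) of
`σ₁` does not end in a later (start in an earlier) block, so `σ₁` repeats itself inside one copy.

A strictly increasing self-map of an interval fixing its ends is the identity, so the values at
which `π` repeats itself at a given height form an interval. By nesting, each further member of `E`
has its entry nearest to `σ₁` among these values, hence lies in its own block and repeats itself as
well. As `E` covers all values, the whole `π`-copy has a single height.
-/

section

open Set

variable {k u i₁ i : ℕ} {π r : ℕ → ℕ} {E : List (ℕ × ℕ)} {σ τ : ℕ × ℕ}

lemma add_sub_le_of_strictMonoOn {g : ℕ → ℕ} {x y a b : ℕ} (hg : StrictMonoOn g (Icc x y))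
    (hxa : x ≤ a) (hab : a ≤ b) (hby : b ≤ y) : g a + (b - a) ≤ g b := by
  induction b, hab using Nat.le_induction with
  | base => simp
  | succ b hab ih =>
    have hstep : g b < g (b + 1) := hg ⟨by omega, by omega⟩ ⟨by omega, hby⟩ b.lt_succ_self
    have := ih (by omega)
    omega

lemma eqOn_id_of_strictMonoOn {g : ℕ → ℕ} {x y : ℕ} (hg : StrictMonoOn g (Icc x y))
    (hx : x ≤ g x) (hy : g y ≤ y) : EqOn g id (Icc x y) := by
  rintro a ⟨hxa, hay⟩
  have hlow := add_sub_le_of_strictMonoOn hg le_rfl hxa hay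
  have hhigh := add_sub_le_of_strictMonoOn hg hxa hay le_rfl
  simp only [id_eq]
  omega

lemma nth_count_add_one_of_forall_not {p : ℕ → Prop} [DecidablePred p] {c d : ℕ} (hc : p c)
    (hd : p d) (hcd : c < d) (hnot : ∀ y, c < y → y < d → ¬ p y) :
    Nat.nth p (Nat.count p c + 1) = d := by
  have hlt := Nat.count_strict_mono hc hcd
  have hle : Nat.count p d ≤ Nat.count p (c + 1) := by
    by_contra! hgt
    obtain ⟨y, hy, hpy⟩ := Nat.exists_of_count_lt_count hgt
    exact hnot y hy.1 hy.2 hpy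
  rw [Nat.count_succ, if_pos hc] at hle
  rw [← hle.antisymm hlt, Nat.nth_count hd]

lemma nontrivial_Icc_of_lt {α : Type*} [Preorder α] {x y : α} (h : x < y) : (Icc x y).Nontrivial :=
  nontrivial_of_lt (left_mem_Icc.2 h.le) (right_mem_Icc.2 h.le) h

lemma getD_mem {α : Type*} {l : List α} {j : ℕ} (hj : j < l.length) (d : α) : l.getD j d ∈ l := by
  rw [List.getD_eq_getElem _ _ hj]
  exact List.getElem_mem hj

/-! ### Divisions and signs -/

/-- The cuts `0 = r 0 < r 1 < ⋯ < r u = k` divide the positions `1, …, k` into `u` nonempty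
consecutive parts. -/
structure IsDivision (k u : ℕ) (r : ℕ → ℕ) : Prop where
  zero : r 0 = 0
  last : r u = k
  strictMonoOn : StrictMonoOn r (Icc 0 u)

/-- The `i`-th part of the division with cuts `r`. Parts are numbered from `0`, so this is the part
with index `i + 1` in `FPEq` and `IsSignedPartition`. -/
abbrev part (r : ℕ → ℕ) (i : ℕ) : Set ℕ := Icc (r i + 1) (r (i + 1))

namespace IsDivision

variable {j a : ℕ}

lemma cut_lt_cut_iff (hr : IsDivision k u r) (hi : i ≤ u) (hj : j ≤ u) : r i < r j ↔ i < j :=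
  hr.strictMonoOn.lt_iff_lt ⟨i.zero_le, hi⟩ ⟨j.zero_le, hj⟩

lemma cut_le_cut (hr : IsDivision k u r) (hij : i ≤ j) (hj : j ≤ u) : r i ≤ r j :=
  hr.strictMonoOn.monotoneOn ⟨i.zero_le, hij.trans hj⟩ ⟨j.zero_le, hj⟩ hij

lemma cut_lt_succ (hr : IsDivision k u r) (hi : i < u) : r i < r (i + 1) :=
  (hr.cut_lt_cut_iff hi.le hi).2 i.lt_succ_self

lemma cut_le (hr : IsDivision k u r) (hi : i ≤ u) : r i ≤ k :=
  hr.last ▸ hr.cut_le_cut hi le_rfl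

lemma part_subset (hr : IsDivision k u r) (hi : i < u) : part r i ⊆ Icc 1 k :=
  Icc_subset_Icc (by omega) (hr.cut_le hi)

lemma eq_of_mem_part (hr : IsDivision k u r) (hi : i < u) (hj : j < u) (hai : a ∈ part r i)
    (haj : a ∈ part r j) : i = j := by
  have hij : i < j + 1 := (hr.cut_lt_cut_iff hi.le hj).1 (by grind)
  have hji : j < i + 1 := (hr.cut_lt_cut_iff hj.le hi).1 (by grind)
  omega

lemma size_le (hr : IsDivision k u r) : u ≤ k := by
  have := add_sub_le_of_strictMonoOn hr.strictMonoOn le_rfl u.zero_le le_rfl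
  rw [hr.last] at this
  omega

end IsDivision

/-- The values `x`, `y`, met in this order, go against the sign `b`: they do not increase if `b` is
`+` (`true`) and do not decrease if `b` is `-` (`false`). -/
def AgainstSign (b : Bool) (x y : ℕ) : Prop := if b then y ≤ x else x ≤ y

lemma AgainstSign.refl (b : Bool) (x : ℕ) : AgainstSign b x x := by
  cases b <;> simp [AgainstSign]

lemma AgainstSign.antisymm {b : Bool} {x y : ℕ} (hxy : AgainstSign b x y)
    (hyx : AgainstSign b y x) : x = y := by
  cases b
  · exact le_antisymm hxy hyx
  · exact le_antisymm hyx hxy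

lemma AgainstSign.imp {b : Bool} {x y x' y' : ℕ} (h : AgainstSign b x y)
    (hle : x ≤ y → x' ≤ y') (hge : y ≤ x → y' ≤ x') : AgainstSign b x' y' := by
  cases b
  · exact hle h
  · exact hge h

lemma exists_againstSign (x y : ℕ) : ∃ b, AgainstSign b x y :=
  (le_total x y).elim (fun h => ⟨false, h⟩) fun h => ⟨true, h⟩

/-- The integer part of the entries of `f_P` in the copy numbered `m` of a part with sign `b`. -/
def height (k : ℕ) (b : Bool) (m : ℕ) : ℕ := if b then m else k - 1 - m

lemma height_lt {b : Bool} {m : ℕ} (hm : m < k) : height k b m < k := by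
  grind [height]

lemma eq_of_againstSign_height {b : Bool} {m m' : ℕ} (hle : m ≤ m') (hm' : m' < k)
    (h : AgainstSign b (height k b m) (height k b m')) : m = m' := by
  grind [AgainstSign, height]

/-- The position `e` comes no later than `e'`, and `π e`, `π e'` are the two extreme values of `π`
on `S`, in the order that goes against the sign `b`. -/
structure SignExtremes (π : ℕ → ℕ) (b : Bool) (S : Set ℕ) (e e' : ℕ) : Prop where
  left_mem : e ∈ S
  right_mem : e' ∈ S
  le : e ≤ e'
  left : ∀ c ∈ S, AgainstSign b (π e) (π c)
  right : ∀ c ∈ S, AgainstSign b (π c) (π e')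

lemma exists_signExtremes {S : Set ℕ} (hfin : S.Finite) (hne : S.Nonempty) :
    ∃ b e e', SignExtremes π b S e e' := by
  obtain ⟨c, hc, hmin⟩ := S.exists_min_image π hfin hne
  obtain ⟨d, hd, hmax⟩ := S.exists_max_image π hfin hne
  obtain hcd | hdc := le_total c d
  · exact ⟨false, c, d, hc, hd, hcd, hmin, hmax⟩
  · exact ⟨true, d, c, hd, hc, hdc, hmax, hmin⟩

namespace SignExtremes

variable {b : Bool} {S : Set ℕ} {e e' : ℕ}

lemma lt (he : SignExtremes π b S e e') (hπ : InjOn π S) (hS : S.Nontrivial) : e < e' := by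
  refine he.le.lt_of_ne ?_
  rintro rfl
  have heq : ∀ c ∈ S, c = e := fun c hc =>
    hπ hc he.left_mem ((he.right c hc).antisymm (he.left c hc))
  obtain ⟨c, hc, d, hd, hcd⟩ := hS
  exact hcd ((heq c hc).trans (heq d hd).symm)

lemma eq_false_iff (he : SignExtremes π b S e e') (hπ : InjOn π S) (hS : S.Nontrivial) {c d : ℕ}
    (hc : c ∈ S) (hd : d ∈ S) (hcd : ∀ x ∈ S, π c ≤ π x ∧ π x ≤ π d) : b = false ↔ c < d := by
  have hlt := he.lt hπ hS
  have hleft := hcd e he.left_mem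
  have hright := hcd e' he.right_mem
  cases b
  · obtain rfl : c = e := hπ hc he.left_mem (le_antisymm hleft.1 (he.left c hc))
    obtain rfl : d = e' := hπ hd he.right_mem (le_antisymm (he.right d hd) hright.2)
    exact iff_of_true rfl hlt
  · obtain rfl : c = e' := hπ hc he.right_mem (le_antisymm hright.1 (he.right c hc))
    obtain rfl : d = e := hπ hd he.left_mem (le_antisymm (he.left d hd) hleft.2)
    exact iff_of_false Bool.noConfusion hlt.not_gt

lemma againstSign_left_of_not_shadowed (he : SignExtremes π b (Icc τ.1 τ.2) e e') (hlt : e < e')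
    (hnot : ¬ Shadowed π σ τ) (hside : σ.2 < τ.1) : AgainstSign b (π (τ.1 - 1)) (π e') := by
  cases b
  · exact not_lt.1 fun h => hnot ⟨e, e', he.left_mem, he.right_mem,
      fun c hc => ⟨he.left c hc, he.right c hc⟩, .inl ⟨hside, hlt, h⟩⟩
  · exact not_lt.1 fun h => hnot ⟨e', e, he.right_mem, he.left_mem,
      fun c hc => ⟨he.right c hc, he.left c hc⟩, .inr (.inl ⟨hside, hlt, h⟩)⟩

lemma againstSign_right_of_not_shadowed (he : SignExtremes π b (Icc τ.1 τ.2) e e') (hlt : e < e')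
    (hnot : ¬ Shadowed π σ τ) (hside : τ.2 < σ.1) : AgainstSign b (π e) (π (τ.2 + 1)) := by
  cases b
  · exact not_lt.1 fun h => hnot ⟨e, e', he.left_mem, he.right_mem,
      fun c hc => ⟨he.left c hc, he.right c hc⟩, .inr (.inr (.inl ⟨hside, hlt, h⟩))⟩
  · exact not_lt.1 fun h => hnot ⟨e', e, he.right_mem, he.left_mem,
      fun c hc => ⟨he.right c hc, he.left c hc⟩, .inr (.inr (.inr ⟨hside, hlt, h⟩))⟩

end SignExtremes

/-- Part `i`, given the sign `b`, has its extremes ordered against `b` and is not shadowed with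
respect to part `i₁`: moving towards part `i₁`, the first position outside part `i` keeps the
order against `b` with the extreme at the far side. -/
def IsGuarded (π r : ℕ → ℕ) (i₁ i : ℕ) (b : Bool) : Prop :=
  ∃ e e', SignExtremes π b (part r i) e e' ∧
    (i₁ < i → AgainstSign b (π (r i)) (π e')) ∧
    (i < i₁ → AgainstSign b (π e) (π (r (i + 1) + 1)))

lemma exists_isGuarded_of_singleton (π : ℕ → ℕ) (i₁ : ℕ) (hi : r (i + 1) = r i + 1) :
    ∃ b, IsGuarded π r i₁ i b := by
  have hextremes : ∀ b, SignExtremes π b (part r i) (r i + 1) (r i + 1) := fun b => by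
    rw [part, hi, Icc_self]
    exact ⟨rfl, rfl, le_rfl, forall_eq.2 (.refl b _), forall_eq.2 (.refl b _)⟩
  obtain hlt | hle := lt_or_ge i₁ i
  · obtain ⟨b, hb⟩ := exists_againstSign (π (r i)) (π (r i + 1))
    exact ⟨b, _, _, hextremes b, fun _ => hb, fun h => absurd h hlt.not_gt⟩
  · obtain ⟨b, hb⟩ := exists_againstSign (π (r i + 1)) (π (r (i + 1) + 1))
    exact ⟨b, _, _, hextremes b, fun h => absurd h hle.not_gt, fun _ => hb⟩

lemma IsGuarded.eq_false_iff {b : Bool} (hguard : IsGuarded π r i₁ i b) (hπ : InjOn π (part r i))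
    (hlen : r i + 1 < r (i + 1)) {c d : ℕ} (hc : c ∈ part r i) (hd : d ∈ part r i)
    (hcd : ∀ x ∈ part r i, π c ≤ π x ∧ π x ≤ π d) : b = false ↔ c < d := by
  obtain ⟨e, e', he, -, -⟩ := hguard
  exact he.eq_false_iff hπ (nontrivial_Icc_of_lt hlen) hc hd hcd

/-! ### Copies inside the associated sequence -/

/-- The coordinates of a `π`-copy in `f_P`, where part `i` has the sign `t i`: the entry `a` of the
copy repeats the entry `base a` of `π`, in the copy numbered `copy a` of the part `block a`. The
monotonicity laws say that positions in `f_P` are compared lexicographically by block, copy and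
base, and values by height and value of the base. -/
structure CopyCoordinates (k u : ℕ) (π r : ℕ → ℕ) (t : ℕ → Bool) where
  block : ℕ → ℕ
  copy : ℕ → ℕ
  base : ℕ → ℕ
  block_lt : ∀ a ∈ Icc 1 k, block a < u
  copy_lt : ∀ a ∈ Icc 1 k, copy a < k
  base_mem : ∀ a ∈ Icc 1 k, base a ∈ part r (block a)
  block_mono : MonotoneOn block (Icc 1 k)
  copy_mono : ∀ a ∈ Icc 1 k, ∀ b ∈ Icc 1 k, a ≤ b → block a = block b → copy a ≤ copy b
  base_strictMono : ∀ a ∈ Icc 1 k, ∀ b ∈ Icc 1 k, a < b → block a = block b →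
    copy a = copy b → base a < base b
  height_mono : ∀ a ∈ Icc 1 k, ∀ b ∈ Icc 1 k, π a ≤ π b →
    height k (t (block a)) (copy a) ≤ height k (t (block b)) (copy b)
  value_strictMono : ∀ a ∈ Icc 1 k, ∀ b ∈ Icc 1 k, π a < π b →
    height k (t (block a)) (copy a) = height k (t (block b)) (copy b) → π (base a) < π (base b)

namespace CopyCoordinates

variable {t : ℕ → Bool}

/-- The entry `a` of the `π`-copy has height `h` and repeats the entry `a` of `π` itself. -/
def AlignedAt (C : CopyCoordinates k u π r t) (h a : ℕ) : Prop :=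
  height k (t (C.block a)) (C.copy a) = h ∧ C.base a = a

lemma copy_eq_of_againstSign (C : CopyCoordinates k u π r t) {a b : ℕ} (ha : a ∈ Icc 1 k)
    (hb : b ∈ Icc 1 k) (hab : a ≤ b) (hblock : C.block a = C.block b)
    (hsign : AgainstSign (t (C.block a)) (π a) (π b)) : C.copy a = C.copy b := by
  refine eq_of_againstSign_height (C.copy_mono a ha b hb hab hblock) (C.copy_lt b hb)
    (hsign.imp (fun h => ?_) fun h => ?_)
  · simpa only [hblock] using C.height_mono a ha b hb h
  · simpa only [hblock] using C.height_mono b hb a ha h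

section Run

variable {x y : ℕ} (C : CopyCoordinates k u π r t) (hsub : Icc x y ⊆ Icc 1 k)

include hsub

lemma block_eq_of_mem_Icc (hx : C.block x = i) (hy : C.block y = i) :
    ∀ a ∈ Icc x y, C.block a = i := fun _ ha =>
  have hxy : x ≤ y := ha.1.trans ha.2
  le_antisymm (hy ▸ C.block_mono (hsub ha) (hsub ⟨hxy, le_rfl⟩) ha.2)
    (hx ▸ C.block_mono (hsub ⟨le_rfl, hxy⟩) (hsub ha) ha.1)

variable {e e' : ℕ} (hx : C.block x = i) (hy : C.block y = i) (hxe : x ≤ e) (hee : e ≤ e')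
  (hey : e' ≤ y) (hleft : AgainstSign (t i) (π x) (π e')) (hright : AgainstSign (t i) (π e) (π y))

include hx hy hxe hee hey hleft hright

/-- The stretches from `x` to `e'` and from `e` to `y` each lie in one copy, and they overlap. -/
lemma copy_eq_of_mem_Icc : ∀ a ∈ Icc x y, C.copy a = C.copy x := by
  have hxI : x ∈ Icc x y := ⟨le_rfl, by omega⟩
  have heI : e ∈ Icc x y := ⟨hxe, by omega⟩
  have heI' : e' ∈ Icc x y := ⟨by omega, hey⟩
  have hyI : y ∈ Icc x y := ⟨by omega, le_rfl⟩
  have hblock := C.block_eq_of_mem_Icc hsub hx hy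
  have hmono : ∀ a ∈ Icc x y, ∀ b ∈ Icc x y, a ≤ b → C.copy a ≤ C.copy b := fun a ha b hb hab =>
    C.copy_mono a (hsub ha) b (hsub hb) hab ((hblock a ha).trans (hblock b hb).symm)
  have hxe' : C.copy x = C.copy e' := C.copy_eq_of_againstSign (hsub hxI) (hsub heI') (by omega)
    (hx.trans (hblock e' heI').symm) (by rwa [hx])
  have hey' : C.copy e = C.copy y := C.copy_eq_of_againstSign (hsub heI) (hsub hyI) (by omega)
    ((hblock e heI).trans hy.symm) (by rwa [hblock e heI])
  intro a ha
  have := hmono x hxI a ha ha.1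
  have := hmono a ha y hyI ha.2
  have := hmono e heI e' heI' hee
  omega

lemma strictMonoOn_base : StrictMonoOn C.base (Icc x y) := fun a ha b hb hab =>
  have hblock := C.block_eq_of_mem_Icc hsub hx hy
  have hcopy := C.copy_eq_of_mem_Icc hsub hx hy hxe hee hey hleft hright
  C.base_strictMono a (hsub ha) b (hsub hb) hab ((hblock a ha).trans (hblock b hb).symm)
    ((hcopy a ha).trans (hcopy b hb).symm)

/-- The bases of the run are distinct entries of part `i`. -/
lemma run_length_lt : y - x < r (i + 1) - r i := by
  have hbx := C.base_mem x (hsub ⟨le_rfl, by omega⟩)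
  have hby := C.base_mem y (hsub ⟨by omega, le_rfl⟩)
  have := add_sub_le_of_strictMonoOn
    (C.strictMonoOn_base hsub hx hy hxe hee hey hleft hright) le_rfl (by omega) le_rfl
  rw [hx] at hbx
  rw [hy] at hby
  simp only [mem_Icc] at hbx hby
  omega

end Run

lemma block_cut_lt (C : CopyCoordinates k u π r t) (hr : IsDivision k u r)
    (hguard : ∀ i < u, IsGuarded π r i₁ i (t i)) (hi₁ : i₁ < i) (hiu : i ≤ u) :
    C.block (r i) < i := by
  have hcut : ∀ j, i ≤ j → j ≤ u → r j ∈ Icc 1 k := fun j hij hju =>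
    ⟨by have := hr.zero; have := (hr.cut_lt_cut_iff u.zero_le hju).2 (by omega); omega,
      hr.cut_le hju⟩
  refine Nat.decreasingInduction' (P := fun j => C.block (r j) < j) (fun j hju hij ih => ?_) hiu
    (C.block_lt _ (hcut u hiu le_rfl))
  by_contra! hlt
  have hj := hr.cut_lt_succ hju
  have hmono := C.block_mono (hcut j hij hju.le) (hcut (j + 1) (by omega) hju) hj.le
  obtain ⟨e, e', he, hout, -⟩ := hguard j hju
  have := C.run_length_lt (i := j)
    (Icc_subset_Icc (hcut j hij hju.le).1 (hcut (j + 1) (by omega) hju).2) (by omega) (by omega)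
    (by have := he.left_mem.1; omega) he.le he.right_mem.2 (hout (by omega))
    (he.left _ ⟨hj, le_rfl⟩)
  omega

lemma le_block_cut_succ (C : CopyCoordinates k u π r t) (hr : IsDivision k u r)
    (hguard : ∀ i < u, IsGuarded π r i₁ i (t i)) (hi₁u : i₁ < u) (hi : i ≤ i₁) :
    i ≤ C.block (r i + 1) := by
  induction i with
  | zero => exact Nat.zero_le _
  | succ i ih =>
    by_contra! hlt
    have hi' := hr.cut_lt_succ (i := i) (by omega)
    have hlast : r (i + 1) + 1 ≤ k :=
      (hr.cut_lt_succ (i := i + 1) (by omega)).trans_le (hr.cut_le (by omega))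
    have hmono := C.block_mono (a := r i + 1) (b := r (i + 1) + 1) ⟨by omega, by omega⟩
      ⟨by omega, hlast⟩ (by omega)
    have := ih (by omega)
    obtain ⟨e, e', he, -, hout⟩ := hguard i (by omega)
    have := C.run_length_lt (i := i) (Icc_subset_Icc (by omega) hlast) (by omega) (by omega)
      he.left_mem.1 he.le (by have := he.right_mem.2; omega) (he.right _ ⟨le_rfl, hi'⟩)
      (hout (by omega))
    omega

lemma exists_forall_part_alignedAt (C : CopyCoordinates k u π r t) (hr : IsDivision k u r)
    (hiu : i < u) (hguard : IsGuarded π r i₁ i (t i)) (hfirst : i ≤ C.block (r i + 1))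
    (hlast : C.block (r (i + 1)) < i + 1) : ∃ h, ∀ a ∈ part r i, C.AlignedAt h a := by
  obtain ⟨e, e', he, -, -⟩ := hguard
  have hsub := hr.part_subset hiu
  have hxI : r i + 1 ∈ part r i := ⟨le_rfl, hr.cut_lt_succ hiu⟩
  have hyI : r (i + 1) ∈ part r i := ⟨hr.cut_lt_succ hiu, le_rfl⟩
  have hmono := C.block_mono (hsub hxI) (hsub hyI) hxI.2
  have hx : C.block (r i + 1) = i := by omega
  have hy : C.block (r (i + 1)) = i := by omega
  have hcopy := C.copy_eq_of_mem_Icc hsub hx hy he.left_mem.1 he.le he.right_mem.2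
    (he.right _ hxI) (he.left _ hyI)
  have hbase := C.strictMonoOn_base hsub hx hy he.left_mem.1 he.le he.right_mem.2
    (he.right _ hxI) (he.left _ hyI)
  have hbx := C.base_mem _ (hsub hxI)
  have hby := C.base_mem _ (hsub hyI)
  rw [hx] at hbx
  rw [hy] at hby
  refine ⟨height k (t i) (C.copy (r i + 1)), fun a ha => ⟨?_, ?_⟩⟩
  · rw [C.block_eq_of_mem_Icc hsub hx hy a ha, hcopy a ha]
  · exact eqOn_id_of_strictMonoOn hbase hbx.1 hby.2 ha

lemma block_eq_of_base_eq (C : CopyCoordinates k u π r t) (hr : IsDivision k u r) {a : ℕ}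
    (hiu : i < u) (ha : a ∈ part r i) (hbase : C.base a = a) : C.block a = i :=
  have hak := hr.part_subset hiu ha
  hr.eq_of_mem_part (C.block_lt a hak) hiu (by simpa only [hbase] using C.base_mem a hak) ha

/-- Listed by value, the values of the bases of the entries between `c` and `d` form a strictly
increasing self-map of the interval `[π c, π d]` fixing its ends, hence the identity. -/
lemma AlignedAt.of_le_of_le {C : CopyCoordinates k u π r t} (hr : IsDivision k u r)
    (hπ : BijOn π (Icc 1 k) (Icc 1 k)) {h c d a : ℕ} (hc : c ∈ Icc 1 k) (hd : d ∈ Icc 1 k)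
    (ha : a ∈ Icc 1 k) (hCc : C.AlignedAt h c) (hCd : C.AlignedAt h d) (hca : π c ≤ π a)
    (had : π a ≤ π d) : C.AlignedAt h a := by
  have hheight : ∀ b ∈ Icc 1 k, π c ≤ π b → π b ≤ π d →
      height k (t (C.block b)) (C.copy b) = h := fun b hb hcb hbd =>
    le_antisymm (hCd.1 ▸ C.height_mono b hb d hd hbd) (hCc.1 ▸ C.height_mono c hc b hb hcb)
  set ι := Function.invFunOn π (Icc 1 k)
  have hι : InvOn ι π (Icc 1 k) (Icc 1 k) := hπ.invOn_invFunOn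
  have hιk : ∀ v ∈ Icc (π c) (π d), ι v ∈ Icc 1 k ∧ π (ι v) = v := fun v hv =>
    have hvk : v ∈ Icc 1 k := ⟨(hπ.mapsTo hc).1.trans hv.1, hv.2.trans (hπ.mapsTo hd).2⟩
    ⟨hπ.surjOn.mapsTo_invFunOn hvk, hι.2 hvk⟩
  have hmono : StrictMonoOn (fun v => π (C.base (ι v))) (Icc (π c) (π d)) := by
    intro v hv w hw hvw
    obtain ⟨hvk, hv'⟩ := hιk v hv
    obtain ⟨hwk, hw'⟩ := hιk w hw
    refine C.value_strictMono _ hvk _ hwk (by rwa [hv', hw']) ?_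
    rw [hheight _ hvk (by rw [hv']; exact hv.1) (by rw [hv']; exact hv.2),
      hheight _ hwk (by rw [hw']; exact hw.1) (by rw [hw']; exact hw.2)]
  have hid : π (C.base (ι (π a))) = π a := eqOn_id_of_strictMonoOn hmono
    (by simp only [hι.1 hc, hCc.2, le_rfl]) (by simp only [hι.1 hd, hCd.2, le_rfl]) ⟨hca, had⟩
  rw [hι.1 ha] at hid
  exact ⟨hheight a ha hca had,
    hπ.injOn (hr.part_subset (C.block_lt a ha) (C.base_mem a ha)) ha hid⟩

end CopyCoordinates

/-- The position in `f_P` of the entry that repeats the entry `p` of part `i` in the copy numbered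
`m` of that part. -/
def copyIndex (k : ℕ) (r : ℕ → ℕ) (i m p : ℕ) : ℕ :=
  r i * k + m * (r (i + 1) - r i) + (p - r i)

lemma copyIndex_mem_Ioc {m p : ℕ} (hm : m < k) (hp : p ∈ part r i) :
    copyIndex k r i m p ∈ Ioc (r i * k) (r (i + 1) * k) := by
  obtain ⟨L, hL⟩ := Nat.exists_eq_add_of_le (show r i ≤ r (i + 1) by have := hp.1; grind)
  have hcopies : (m + 1) * L ≤ k * L := Nat.mul_le_mul_right L hm
  rw [add_mul, one_mul] at hcopies
  simp only [mem_Icc, mem_Ioc, copyIndex, hL, Nat.add_sub_cancel_left, add_mul,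
    mul_comm L k] at hp ⊢
  omega

lemma IsDivision.exists_copyIndex_eq (hr : IsDivision k u r) {n : ℕ} (hn : n ∈ Icc 1 (k * k)) :
    ∃ i < u, ∃ m < k, ∃ p ∈ part r i, copyIndex k r i m p = n := by
  have hcover : n ∈ Ioc (r 0 * k) (r u * k) := by
    rw [hr.zero, hr.last, zero_mul]
    exact hn
  have hblocks := Ioc_subset_biUnion_Ioc u (fun i => r i * k) hcover
  simp only [mem_iUnion, Finset.mem_range] at hblocks
  obtain ⟨i, hi, hlow, hhigh⟩ := hblocks
  obtain ⟨L, hL⟩ := Nat.exists_eq_add_of_lt (hr.cut_lt_succ hi)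
  obtain ⟨q, hq⟩ := Nat.exists_eq_add_of_lt hlow
  have hqk : q < (L + 1) * k := by
    rw [hL, add_assoc, add_mul] at hhigh
    omega
  have hmod : q % (L + 1) < L + 1 := Nat.mod_lt q L.succ_pos
  refine ⟨i, hi, q / (L + 1), Nat.div_lt_of_lt_mul hqk, r i + (q % (L + 1) + 1), ?_, ?_⟩
  · exact ⟨by omega, by omega⟩
  · rw [copyIndex, hL, hq, add_assoc (r i), Nat.add_sub_cancel_left, Nat.add_sub_cancel_left,
      add_assoc, ← add_assoc (q / (L + 1) * (L + 1)), Nat.div_add_mod', add_assoc]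

lemma IsDivision.block_le_of_copyIndex_le (hr : IsDivision k u r) {m p i' m' p' : ℕ}
    (hi : i < u) (hm : m < k) (hp : p ∈ part r i) (hm' : m' < k) (hp' : p' ∈ part r i')
    (h : copyIndex k r i m p ≤ copyIndex k r i' m' p') : i ≤ i' := by
  by_contra! hlt
  have hcuts : r (i' + 1) * k ≤ r i * k := Nat.mul_le_mul_right k (hr.cut_le_cut hlt hi.le)
  have := (copyIndex_mem_Ioc hm hp).1
  have := (copyIndex_mem_Ioc hm' hp').2
  omega

lemma copy_le_of_copyIndex_le {m p m' p' : ℕ} (hp : p ∈ part r i) (hp' : p' ∈ part r i)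
    (h : copyIndex k r i m p ≤ copyIndex k r i m' p') : m ≤ m' := by
  by_contra! hlt
  have hcopies := Nat.mul_le_mul_right (r (i + 1) - r i) (Nat.succ_le_of_lt hlt)
  rw [Nat.succ_mul] at hcopies
  simp only [copyIndex, mem_Icc] at h hp hp'
  omega

lemma FPEq.apply_copyIndex {s : ℕ → Bool} {f : ℕ → ℝ} (hf : FPEq k u π r s f) {m p : ℕ}
    (hi : i < u) (hm : m < k) (hp : p ∈ part r i) :
    f (copyIndex k r i m p) = height k (s (i + 1)) m + (π p : ℝ) / (2 * k) := by
  have hvalue := hf (i + 1) (by omega) hi m hm (p - r i) (by have := hp.1; omega)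
    (Nat.sub_le_sub_right hp.2 _)
  simp only [Nat.add_sub_cancel, Nat.add_sub_cancel' (Nat.le_of_succ_le hp.1)] at hvalue
  rw [copyIndex, hvalue, height]
  split_ifs
  · rfl
  · rw [Nat.sub_sub, Nat.cast_sub (by omega)]
    push_cast
    ring

lemma div_two_mul_mem_Ioo {v : ℕ} (hv : v ∈ Icc 1 k) : (v : ℝ) / (2 * k) ∈ Ioo (0 : ℝ) 1 := by
  have hv1 : (1 : ℝ) ≤ v := by exact_mod_cast hv.1
  have hvk : (v : ℝ) ≤ k := by exact_mod_cast hv.2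
  exact ⟨by apply div_pos <;> linarith, by rw [div_lt_one (by linarith)]; linarith⟩

lemma IsPatternAt.exists_copyCoordinates {s : ℕ → Bool} {f : ℕ → ℝ} {idx : ℕ → ℕ}
    (hidx : IsPatternAt k π f idx) (hr : IsDivision k u r) (hπ : MapsTo π (Icc 1 k) (Icc 1 k))
    (hf : FPEq k u π r s f) :
    ∃ C : CopyCoordinates k u π r fun i => s (i + 1), ∀ a ∈ Icc 1 k,
      f (idx a) = height k (s (C.block a + 1)) (C.copy a) + (π (C.base a) : ℝ) / (2 * k) := by
  obtain ⟨hmono, hrange, hlt⟩ := hidx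
  choose! B hB m hm p hp hpos using fun a (ha : a ∈ Icc 1 k) => hr.exists_copyIndex_eq (hrange a ha)
  have hvalue : ∀ a ∈ Icc 1 k,
      f (idx a) = height k (s (B a + 1)) (m a) + (π (p a) : ℝ) / (2 * k) := fun a ha =>
    hpos a ha ▸ hf.apply_copyIndex (hB a ha) (hm a ha) (hp a ha)
  have hfrac : ∀ a ∈ Icc 1 k, (π (p a) : ℝ) / (2 * k) ∈ Ioo (0 : ℝ) 1 := fun a ha =>
    div_two_mul_mem_Ioo (hπ (hr.part_subset (hB a ha) (hp a ha)))
  have hle : ∀ a ∈ Icc 1 k, ∀ b ∈ Icc 1 k, a ≤ b →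
      copyIndex k r (B a) (m a) (p a) ≤ copyIndex k r (B b) (m b) (p b) := fun a ha b hb hab => by
    rw [hpos a ha, hpos b hb]
    exact hmono.monotoneOn ha hb hab
  refine ⟨⟨B, m, p, hB, hm, hp, fun a ha b hb hab => ?_, fun a ha b hb hab hblock => ?_,
    fun a ha b hb hab hblock hcopy => ?_, fun a ha b hb hab => ?_,
    fun a ha b hb hab hheight => ?_⟩, hvalue⟩
  · exact hr.block_le_of_copyIndex_le (hB a ha) (hm a ha) (hp a ha) (hm b hb) (hp b hb)
      (hle a ha b hb hab)
  · refine copy_le_of_copyIndex_le (k := k) (hp a ha) (hblock ▸ hp b hb) ?_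
    simpa only [hblock] using hle a ha b hb hab
  · have hpos_lt := hmono ha hb hab
    rw [← hpos a ha, ← hpos b hb, hblock, hcopy, copyIndex, copyIndex] at hpos_lt
    omega
  · have hvalue_le : f (idx a) ≤ f (idx b) := not_lt.1 fun h => hab.not_gt ((hlt b hb a ha).1 h)
    rw [hvalue a ha, hvalue b hb] at hvalue_le
    have hlt_succ : (height k (s (B a + 1)) (m a) : ℝ) < height k (s (B b + 1)) (m b) + 1 := by
      linarith [(hfrac a ha).1, (hfrac b hb).2]
    exact Nat.lt_succ_iff.1 (by exact_mod_cast hlt_succ)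
  · have hvalue_lt := (hlt a ha b hb).2 hab
    rw [hvalue a ha, hvalue b hb, hheight, add_lt_add_iff_left] at hvalue_lt
    have hk : (0 : ℝ) < k := by exact_mod_cast ha.1.trans ha.2
    exact_mod_cast (div_lt_div_iff_of_pos_right (by positivity)).1 hvalue_lt

/-! ### Entanglings -/

variable {j : ℕ}

lemma exists_pmin (hσ : σ.1 ≤ σ.2) : ∃ c ∈ Icc σ.1 σ.2, π c = pmin π σ :=
  Nat.sInf_mem ((nonempty_Icc.2 hσ).image π)

lemma exists_pmax (hσ : σ.1 ≤ σ.2) : ∃ c ∈ Icc σ.1 σ.2, π c = pmax π σ :=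
  Nat.sSup_mem ((nonempty_Icc.2 hσ).image π) ((finite_Icc _ _).image π).bddAbove

lemma exists_prevMin (hj : 0 < j) : ∃ i < j, prevMin π E j = pmin π (E.getD i (0, 0)) :=
  Nat.sInf_mem (s := {v | ∃ i < j, v = pmin π (E.getD i (0, 0))}) ⟨_, 0, hj, rfl⟩

lemma exists_prevMax (hj : 0 < j) : ∃ i < j, prevMax π E j = pmax π (E.getD i (0, 0)) :=
  Nat.sSup_mem (s := {v | ∃ i < j, v = pmax π (E.getD i (0, 0))}) ⟨_, 0, hj, rfl⟩
    (((finite_Iio j).image fun i => pmax π (E.getD i (0, 0))).subset <| by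
      rintro _ ⟨i, hi, rfl⟩
      exact mem_image_of_mem _ hi).bddAbove

namespace IsEntangling

lemma first_mem (hE : IsEntangling k π E) : E.getD 0 (0, 0) ∈ E :=
  getD_mem (List.length_pos_iff.2 hE.nonempty) _

lemma Icc_subset (hE : IsEntangling k π E) (hσ : σ ∈ E) : Icc σ.1 σ.2 ⊆ Icc 1 k :=
  Icc_subset_Icc (hE.valid σ hσ).1 (hE.valid σ hσ).2.2

lemma exists_eq_prevMin (hE : IsEntangling k π E) (hj₀ : 0 < j) (hj : j < E.length) :
    ∃ i < j, ∃ c ∈ Icc (E.getD i (0, 0)).1 (E.getD i (0, 0)).2, π c = prevMin π E j := by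
  obtain ⟨i, hij, hi⟩ := exists_prevMin (π := π) (E := E) hj₀
  exact ⟨i, hij, hi ▸ exists_pmin (hE.valid _ (getD_mem (hij.trans hj) _)).2.1.le⟩

lemma exists_eq_prevMax (hE : IsEntangling k π E) (hj₀ : 0 < j) (hj : j < E.length) :
    ∃ i < j, ∃ c ∈ Icc (E.getD i (0, 0)).1 (E.getD i (0, 0)).2, π c = prevMax π E j := by
  obtain ⟨i, hij, hi⟩ := exists_prevMax (π := π) (E := E) hj₀
  exact ⟨i, hij, hi ▸ exists_pmax (hE.valid _ (getD_mem (hij.trans hj) _)).2.1.le⟩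

lemma forall_of_forall_mem (hE : IsEntangling k π E) (hπ : MapsTo π (Icc 1 k) (Icc 1 k))
    {Q : ℕ → Prop}
    (hconvex : ∀ c ∈ Icc 1 k, ∀ d ∈ Icc 1 k, ∀ a ∈ Icc 1 k, Q c → Q d → π c ≤ π a → π a ≤ π d →
      Q a)
    (hmem : ∀ σ ∈ E, ∀ a ∈ Icc σ.1 σ.2, Q a) : ∀ a ∈ Icc 1 k, Q a := by
  intro a ha
  obtain ⟨σ, hσ, hmin, hmax⟩ := hE.cover (π a) (hπ ha).1 (hπ ha).2
  have hle := (hE.valid σ hσ).2.1.le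
  obtain ⟨c, hc, hcmin⟩ := exists_pmin (π := π) hle
  obtain ⟨d, hd, hdmax⟩ := exists_pmax (π := π) hle
  exact hconvex c (hE.Icc_subset hσ hc) d (hE.Icc_subset hσ hd) a ha (hmem σ hσ c hc)
    (hmem σ hσ d hd) (hcmin ▸ hmin) (hdmax ▸ hmax)

lemma induction (hE : IsEntangling k π E) (hπ : MapsTo π (Icc 1 k) (Icc 1 k)) {Q : ℕ → Prop}
    (hfirst : ∀ a ∈ Icc (E.getD 0 (0, 0)).1 (E.getD 0 (0, 0)).2, Q a)
    (hconvex : ∀ c ∈ Icc 1 k, ∀ d ∈ Icc 1 k, ∀ a ∈ Icc 1 k, Q c → Q d → π c ≤ π a → π a ≤ π d →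
      Q a)
    (hright : ∀ σ ∈ E, (E.getD 0 (0, 0)).2 < σ.1 → Q σ.1 → ∀ a ∈ Icc σ.1 σ.2, Q a)
    (hleft : ∀ σ ∈ E, σ.2 < (E.getD 0 (0, 0)).1 → Q σ.2 → ∀ a ∈ Icc σ.1 σ.2, Q a) :
    ∀ a ∈ Icc 1 k, Q a := by
  refine hE.forall_of_forall_mem hπ hconvex fun σ hσ => ?_
  obtain ⟨j, hj, rfl⟩ := List.getElem_of_mem hσ
  rw [← List.getD_eq_getElem _ (0, 0) hj]
  clear hσ
  induction j using Nat.strong_induction_on with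
  | _ j ih =>
    obtain rfl | hj₀ := Nat.eq_zero_or_pos j
    · exact hfirst
    obtain ⟨i, hij, c, hc, hcmin⟩ := hE.exists_eq_prevMin hj₀ hj
    obtain ⟨i', hij', d, hd, hdmax⟩ := hE.exists_eq_prevMax hj₀ hj
    have hentry : ∀ a ∈ Icc 1 k, prevMin π E j < π a → π a < prevMax π E j → Q a :=
      fun a ha hmin hmax => hconvex c (hE.Icc_subset (getD_mem (hij.trans hj) _) hc)
        d (hE.Icc_subset (getD_mem (hij'.trans hj) _) hd) a ha (ih i hij (hij.trans hj) c hc)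
        (ih i' hij' (hij'.trans hj) d hd) (hcmin ▸ hmin.le) (hdmax ▸ hmax.le)
    have hmem := getD_mem hj (0, 0)
    have hle := (hE.valid _ hmem).2.1.le
    obtain ⟨hside, hmin, hmax⟩ | ⟨hside, hmin, hmax⟩ := hE.nest j hj₀ hj
    · exact hright _ hmem hside (hentry _ (hE.Icc_subset hmem (left_mem_Icc.2 hle)) hmin hmax)
    · exact hleft _ hmem hside (hentry _ (hE.Icc_subset hmem (right_mem_Icc.2 hle)) hmin hmax)

lemma not_shadowed_of_mem (hE : IsEntangling k π E) (hσ : σ ∈ E) (hne : σ ≠ E.getD 0 (0, 0)) :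
    ¬ Shadowed π (E.getD 0 (0, 0)) σ := by
  obtain ⟨j, hj, rfl⟩ := List.getElem_of_mem hσ
  rw [← List.getD_eq_getElem _ (0, 0) hj] at hne ⊢
  refine hE.notShadowed j (Nat.one_le_iff_ne_zero.2 ?_) hj
  rintro rfl
  exact hne rfl

lemma eq_of_mem_Icc (hE : IsEntangling k π E) (hσ : σ ∈ E) (hτ : τ ∈ E) {a : ℕ}
    (haσ : a ∈ Icc σ.1 σ.2) (haτ : a ∈ Icc τ.1 τ.2) : σ = τ := by
  have : Std.Symm fun σ τ : ℕ × ℕ => Disjoint (Icc σ.1 σ.2) (Icc τ.1 τ.2) :=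
    ⟨fun _ _ h => h.symm⟩
  by_contra hne
  exact Set.disjoint_left.1 (hE.disj.forall hσ hτ hne) haσ haτ

end IsEntangling

lemma CopyCoordinates.exists_forall_alignedAt {t : ℕ → Bool} (C : CopyCoordinates k u π r t)
    (hr : IsDivision k u r) (hπ : BijOn π (Icc 1 k) (Icc 1 k)) (hE : IsEntangling k π E)
    (hparts : ∀ σ ∈ E, ∃ i < u, σ = (r i + 1, r (i + 1))) (hi₁ : i₁ < u)
    (hfirst : E.getD 0 (0, 0) = (r i₁ + 1, r (i₁ + 1)))
    (hguard : ∀ i < u, IsGuarded π r i₁ i (t i)) :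
    ∃ h, ∀ a ∈ Icc 1 k, C.AlignedAt h a := by
  have hleft_block := fun i => C.le_block_cut_succ hr hguard hi₁ (i := i)
  have hright_block := fun i => C.block_cut_lt hr hguard (i := i + 1)
  obtain ⟨h, hh⟩ := C.exists_forall_part_alignedAt hr hi₁ (hguard i₁ hi₁) (hleft_block i₁ le_rfl)
    (hright_block i₁ i₁.lt_succ_self hi₁)
  refine ⟨h, hE.induction hπ.mapsTo (by rwa [hfirst]) (fun c hc d hd a ha =>
    AlignedAt.of_le_of_le hr hπ hc hd ha) (fun σ hσ hside halign => ?_)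
    fun σ hσ hside halign => ?_⟩
  · obtain ⟨i, hi, rfl⟩ := hparts σ hσ
    rw [hfirst] at hside
    have hi₁i : i₁ < i := by
      have := (hr.cut_lt_cut_iff hi₁ (Nat.succ_le_of_lt hi)).1 (hside.trans_le (hr.cut_lt_succ hi))
      omega
    have hmem : r i + 1 ∈ part r i := left_mem_Icc.2 (hr.cut_lt_succ hi)
    obtain ⟨h', hh'⟩ := C.exists_forall_part_alignedAt hr hi (hguard i hi)
      (C.block_eq_of_base_eq hr hi hmem halign.2).ge (hright_block i (by omega) hi)
    rwa [← (hh' _ hmem).1.symm.trans halign.1]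
  · obtain ⟨i, hi, rfl⟩ := hparts σ hσ
    rw [hfirst] at hside
    have hii₁ : i < i₁ := by
      have := (hr.cut_lt_cut_iff hi hi₁).1 (hside.trans_le (hr.cut_lt_succ hi₁))
      omega
    have hmem : r (i + 1) ∈ part r i := right_mem_Icc.2 (hr.cut_lt_succ hi)
    obtain ⟨h', hh'⟩ := C.exists_forall_part_alignedAt hr hi (hguard i hi)
      (hleft_block i hii₁.le) ((C.block_eq_of_base_eq hr hi hmem halign.2).trans_lt i.lt_succ_self)
    rwa [← (hh' _ hmem).1.symm.trans halign.1]

lemma IsPatternAt.trivialCopy {s : ℕ → Bool} {f : ℕ → ℝ} {idx : ℕ → ℕ}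
    (hidx : IsPatternAt k π f idx) (hr : IsDivision k u r) (hπ : BijOn π (Icc 1 k) (Icc 1 k))
    (hf : FPEq k u π r s f) (hE : IsEntangling k π E)
    (hparts : ∀ σ ∈ E, ∃ i < u, σ = (r i + 1, r (i + 1))) (hi₁ : i₁ < u)
    (hfirst : E.getD 0 (0, 0) = (r i₁ + 1, r (i₁ + 1)))
    (hguard : ∀ i < u, IsGuarded π r i₁ i (s (i + 1))) : TrivialCopy k f idx := by
  obtain ⟨C, hvalue⟩ := hidx.exists_copyCoordinates hr hπ.mapsTo hf
  obtain ⟨h, hh⟩ := C.exists_forall_alignedAt hr hπ hE hparts hi₁ hfirst hguard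
  have h1 : 1 ∈ Icc 1 k := ⟨le_rfl, (Nat.one_le_of_lt hi₁).trans hr.size_le⟩
  refine ⟨h, (hh 1 h1).1 ▸ height_lt (C.copy_lt 1 h1), fun a ha => ?_⟩
  have hfrac := div_two_mul_mem_Ioo (hπ.mapsTo ha)
  rw [hvalue a ha, (hh a ha).1, (hh a ha).2]
  exact ⟨by linarith [hfrac.1], by linarith [hfrac.2]⟩

/-! ### The partition `Λ(E)` -/

/-- The position `y` does not precede another entry of the same part of `Λ(E)`: it is `0`, the last
position of a part, or beyond all parts. -/
def IsEnd (E : List (ℕ × ℕ)) (y : ℕ) : Prop := ∀ σ ∈ E, ¬ (σ.1 ≤ y ∧ y < σ.2)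

/-- The cuts of the partition `Λ(E)`. -/
noncomputable def cut (E : List (ℕ × ℕ)) : ℕ → ℕ := Nat.nth (IsEnd E)

namespace IsEntangling

lemma isEnd_of_le (hE : IsEntangling k π E) {y : ℕ} (hy : k ≤ y) : IsEnd E y :=
  fun σ hσ h => (h.2.trans_le ((hE.valid σ hσ).2.2.trans hy)).false

lemma isEnd_zero (hE : IsEntangling k π E) : IsEnd E 0 :=
  fun σ hσ h => Nat.not_succ_le_zero 0 ((hE.valid σ hσ).1.trans h.1)

lemma isEnd_fst_sub_one (hE : IsEntangling k π E) (hσ : σ ∈ E) : IsEnd E (σ.1 - 1) := by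
  rintro τ hτ ⟨hle, hlt⟩
  have := (hE.valid σ hσ).1
  obtain rfl : σ = τ := hE.eq_of_mem_Icc hσ hτ (a := σ.1)
    (left_mem_Icc.2 (hE.valid σ hσ).2.1.le) ⟨by omega, by omega⟩
  omega

lemma isEnd_snd (hE : IsEntangling k π E) (hσ : σ ∈ E) : IsEnd E σ.2 := by
  rintro τ hτ ⟨hle, hlt⟩
  obtain rfl : σ = τ := hE.eq_of_mem_Icc hσ hτ (right_mem_Icc.2 (hE.valid σ hσ).2.1.le)
    ⟨hle, hlt.le⟩
  exact hlt.false

lemma setOf_isEnd_infinite (hE : IsEntangling k π E) : {y | IsEnd E y}.Infinite :=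
  (Ici_infinite k).mono fun _ hy => hE.isEnd_of_le hy

lemma strictMono_cut (hE : IsEntangling k π E) : StrictMono (cut E) :=
  Nat.nth_strictMono hE.setOf_isEnd_infinite

lemma card_filter_not_isEnd [DecidablePred (IsEnd E)] (hE : IsEntangling k π E) :
    ((Finset.range k).filter fun y => ¬ IsEnd E y).card = (E.map fun σ => σ.2 - σ.1).sum := by
  have hflat : ((Finset.range k).filter fun y => ¬ IsEnd E y) =
      (E.flatMap fun σ => List.range' σ.1 (σ.2 - σ.1)).toFinset := by
    ext y
    simp only [Finset.mem_filter, Finset.mem_range, List.mem_toFinset, List.mem_flatMap,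
      List.mem_range'_1]
    simp only [IsEnd, not_forall, not_not]
    constructor
    · rintro ⟨-, σ, hσ, h⟩
      exact ⟨σ, hσ, by omega⟩
    · rintro ⟨σ, hσ, h⟩
      have := hE.valid σ hσ
      exact ⟨by omega, σ, hσ, by omega⟩
  have hnodup : (E.flatMap fun σ => List.range' σ.1 (σ.2 - σ.1)).Nodup := by
    refine List.nodup_flatMap.2 ⟨fun σ _ => List.nodup_range', hE.disj.imp fun hdisj y hσ hτ => ?_⟩
    rw [List.mem_range'_1] at hσ hτ
    exact Set.disjoint_left.1 hdisj ⟨hσ.1, by omega⟩ ⟨hτ.1, by omega⟩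
  simp only [hflat, List.toFinset_card_of_nodup hnodup, List.length_flatMap, List.length_range']

lemma count_isEnd [DecidablePred (IsEnd E)] (hE : IsEntangling k π E) :
    Nat.count (IsEnd E) k = dval k E := by
  have hsum := (Finset.range k).card_filter_add_card_filter_not (IsEnd E)
  rw [hE.card_filter_not_isEnd, Finset.card_range] at hsum
  rw [Nat.count_eq_card_filter_range, dval]
  exact Nat.eq_sub_of_add_eq hsum

lemma isDivision_cut (hE : IsEntangling k π E) : IsDivision k (dval k E) (cut E) where
  zero := Nat.nth_zero_of_zero hE.isEnd_zero
  last := by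
    classical
    rw [← hE.count_isEnd]
    exact Nat.nth_count (hE.isEnd_of_le le_rfl)
  strictMonoOn := hE.strictMono_cut.strictMonoOn _

lemma exists_eq_cut (hE : IsEntangling k π E) (hσ : σ ∈ E) :
    ∃ i < dval k E, σ = (cut E i + 1, cut E (i + 1)) := by
  classical
  obtain ⟨hfst, hlt, hsnd⟩ := hE.valid σ hσ
  have hcut : cut E (Nat.count (IsEnd E) (σ.1 - 1)) = σ.1 - 1 :=
    Nat.nth_count (hE.isEnd_fst_sub_one hσ)
  have hcut_succ : cut E (Nat.count (IsEnd E) (σ.1 - 1) + 1) = σ.2 :=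
    nth_count_add_one_of_forall_not (hE.isEnd_fst_sub_one hσ) (hE.isEnd_snd hσ) (by omega)
      fun y _ hy hend => hend σ hσ ⟨by omega, hy⟩
  refine ⟨_, hE.strictMono_cut.lt_iff_lt.1 ?_, Prod.ext_iff.2 ⟨?_, hcut_succ.symm⟩⟩
  · rw [hcut, hE.isDivision_cut.last]
    omega
  · rw [hcut]
    omega

lemma cut_succ_eq_or_mem (hE : IsEntangling k π E) (i : ℕ) :
    cut E (i + 1) = cut E i + 1 ∨ (cut E i + 1, cut E (i + 1)) ∈ E := by
  have hlt := hE.strictMono_cut (Nat.lt_add_one i)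
  by_cases hend : IsEnd E (cut E i + 1)
  · refine .inl (le_antisymm (not_lt.1 fun hgt => ?_) hlt)
    exact (Nat.le_nth_of_lt_nth_succ hgt hend).not_gt (cut E i).lt_succ_self
  · simp only [IsEnd, not_forall, not_not] at hend
    obtain ⟨σ, hσ, hle, hgt⟩ := hend
    obtain ⟨j, -, rfl⟩ := hE.exists_eq_cut hσ
    have hji : j < i + 1 := hE.strictMono_cut.lt_iff_lt.1 (by omega)
    have hij : i < j + 1 := hE.strictMono_cut.lt_iff_lt.1 (by omega)
    obtain rfl : j = i := by omega
    exact .inr hσ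

end IsEntangling

namespace IsEntangling

lemma exists_isGuarded (hE : IsEntangling k π E) (hπ : InjOn π (Icc 1 k)) (i : ℕ)
    (hfirst : E.getD 0 (0, 0) = (cut E i₁ + 1, cut E (i₁ + 1))) :
    ∃ b, IsGuarded π (cut E) i₁ i b := by
  obtain hsingle | hσ := hE.cut_succ_eq_or_mem i
  · exact exists_isGuarded_of_singleton π i₁ hsingle
  have hlen := (hE.valid _ hσ).2.1
  obtain ⟨b, e, e', he⟩ := exists_signExtremes (π := π) (finite_Icc (cut E i + 1) (cut E (i + 1)))
    (nonempty_Icc.2 hlen.le)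
  have hlt := he.lt (hπ.mono (hE.Icc_subset hσ)) (nontrivial_Icc_of_lt hlen)
  have hnot : i ≠ i₁ → ¬ Shadowed π (E.getD 0 (0, 0)) (cut E i + 1, cut E (i + 1)) := fun hne =>
    hE.not_shadowed_of_mem hσ fun heq => hne <| hE.strictMono_cut.injective <|
      Nat.succ_injective (congrArg Prod.fst (heq.trans hfirst))
  have hmono := hE.strictMono_cut.monotone
  refine ⟨b, e, e', he, fun hi₁ => ?_, fun hi => ?_⟩
  · refine he.againstSign_left_of_not_shadowed hlt (hnot hi₁.ne') ?_
    rw [hfirst]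
    exact Nat.lt_succ_of_le (hmono hi₁)
  · refine he.againstSign_right_of_not_shadowed hlt (hnot hi.ne) ?_
    rw [hfirst]
    exact Nat.lt_succ_of_le (hmono hi)

theorem exists_uniqueSP (hE : IsEntangling k π E) (hπ : BijOn π (Icc 1 k) (Icc 1 k)) :
    ∃ r : ℕ → ℕ, ∃ s : ℕ → Bool, UniqueSP k (dval k E) π r s ∧
      ∀ σ ∈ E, ∃ i, 1 ≤ i ∧ i ≤ dval k E ∧ r (i - 1) + 1 = σ.1 ∧ r i = σ.2 := by
  have hr := hE.isDivision_cut
  obtain ⟨i₁, hi₁, hfirst⟩ := hE.exists_eq_cut hE.first_mem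
  choose t ht using fun i => hE.exists_isGuarded hπ.injOn i hfirst
  refine ⟨cut E, fun i => t (i - 1), ⟨⟨hr.zero, hr.last, hr.strictMonoOn, ?_⟩,
    fun f hf idx hidx => ?_⟩, fun σ hσ => ?_⟩
  · rintro (_ | i) h1 hi hlen a ha b hb hab
    · omega
    · exact (ht i).eq_false_iff (hπ.injOn.mono (hr.part_subset hi)) (by grind) ha hb hab
  · exact hidx.trivialCopy hr hπ hf hE (fun σ => hE.exists_eq_cut) hi₁ hfirst fun i _ => ht i
  · obtain ⟨i, hi, rfl⟩ := hE.exists_eq_cut hσ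
    exact ⟨i + 1, i.succ_pos, hi, rfl, rfl⟩

end IsEntangling

lemma UniqueSP.size_le {s : ℕ → Bool} (h : UniqueSP k u π r s) : u ≤ k :=
  IsDivision.size_le ⟨h.1.1, h.1.2.1, h.1.2.2.1⟩

end

/-- For every entangling `E` of `π` there is a sign vector turning the partition `Λ(E)`
(whose parts are the elements of `E` and singletons elsewhere, `d(E)` parts in total) into a
unique signed partition; consequently `d(π) ≤ u(π)`. -/
theorem stmt_9 (k : ℕ) (hk : 1 ≤ k) (π : ℕ → ℕ)
    (hπ : Set.BijOn π (Set.Icc 1 k) (Set.Icc 1 k))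
    (E : List (ℕ × ℕ)) (hE : IsEntangling k π E) :
    (∃ r : ℕ → ℕ, ∃ s : ℕ → Bool, UniqueSP k (dval k E) π r s ∧
      ∀ σ ∈ E, ∃ i, 1 ≤ i ∧ i ≤ dval k E ∧ r (i - 1) + 1 = σ.1 ∧ r i = σ.2) ∧
    entNum k π ≤ uspn k π := by
  refine ⟨hE.exists_uniqueSP hπ, csSup_le ⟨_, E, hE, rfl⟩ ?_⟩
  rintro d ⟨E', hE', rfl⟩
  obtain ⟨r, s, hunique, -⟩ := hE'.exists_uniqueSP hπ
  refine le_csSup ⟨k, ?_⟩ ⟨r, s, hunique⟩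
  rintro u ⟨r', s', hunique'⟩
  exact hunique'.size_le
end

section
/- Let π be a permutation of length k chosen uniformly at random, with positions i, j such that π(i) = 1 and π(j) = k, and suppose i < j. Then with probability 1 − O(k^{−1/4}) all of the following hold: π(i+1) > k^{3/4}, π(j−1) < k − k^{3/4}, j − i ≥ k^{3/4}, and there exists an index x with i+1 < x < j−1 such that π(x) < k^{3/4} and π(x+1) > k − k^{3/4}. -/
/-!
Let `M` be the scale `k ^ (3 / 4)`. An extreme value next to the position of `1` or of `k`, or these
two positions being closer than `M`, prescribes two values of `π` in at most `k * M` ways, so each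
of these has probability `O(M / k)`. For the jump, condition on the positions `i` and `j` of `1` and
`k` with `j - i ≥ M` and cut the stretch between them into about `M / 2` disjoint pairs of adjacent
positions. A given pair carries a small value followed by a large one with probability about
`M ^ 2 / k ^ 2`, and two such events are nonpositively correlated, because using up a small and a
large value costs more than the shrinking of the set of free values gains. By the second moment
method no pair carries a jump with probability `O(k ^ 2 / M ^ 3)`. Both error terms equal
`k ^ (-1 / 4)` exactly when `M = k ^ (3 / 4)`.
-/

open Finset
open scoped Nat

section SecondMoment

variable {Ω ι : Type*} {p : ι → Ω → Prop} [∀ t, DecidablePred (p t)]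

theorem sum_card_filter_sq (E : Finset Ω) (I : Finset ι) :
    ∑ ω ∈ E, #{t ∈ I | p t ω} ^ 2 = ∑ t ∈ I, ∑ s ∈ I, #{ω ∈ E | p t ω ∧ p s ω} := by
  have hsq (ω : Ω) :
      #{t ∈ I | p t ω} ^ 2 = ∑ t ∈ I, ∑ s ∈ I, if p t ω ∧ p s ω then 1 else 0 := by
    simp only [sq, card_filter, sum_mul_sum, ite_and, ite_mul, one_mul, zero_mul]
  rw [sum_congr rfl fun ω _ ↦ hsq ω, sum_comm]
  refine sum_congr rfl fun t _ ↦ ?_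
  rw [sum_comm]
  simp only [card_filter]

theorem card_mul_sum_card_filter_sq_le {E : Finset Ω} {I : Finset ι}
    (hcov : ∀ t ∈ I, ∀ s ∈ I, t ≠ s →
      #E * #{ω ∈ E | p t ω ∧ p s ω} ≤ #{ω ∈ E | p t ω} * #{ω ∈ E | p s ω}) :
    #E * ∑ ω ∈ E, #{t ∈ I | p t ω} ^ 2 ≤
      #E * ∑ t ∈ I, #{ω ∈ E | p t ω} + (∑ t ∈ I, #{ω ∈ E | p t ω}) ^ 2 := by
  classical
  have hpair : ∀ t ∈ I, ∀ s ∈ I, #E * #{ω ∈ E | p t ω ∧ p s ω} ≤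
      (if t = s then #E * #{ω ∈ E | p t ω} else 0) + #{ω ∈ E | p t ω} * #{ω ∈ E | p s ω} := by
    intro t ht s hs
    split_ifs with hts
    · simp only [hts, and_self, le_add_iff_nonneg_right, zero_le]
    · simpa using hcov t ht s hs hts
  calc #E * ∑ ω ∈ E, #{t ∈ I | p t ω} ^ 2
      = ∑ t ∈ I, ∑ s ∈ I, #E * #{ω ∈ E | p t ω ∧ p s ω} := by
        simp only [sum_card_filter_sq, mul_sum]
    _ ≤ ∑ t ∈ I, ∑ s ∈ I, ((if t = s then #E * #{ω ∈ E | p t ω} else 0) +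
          #{ω ∈ E | p t ω} * #{ω ∈ E | p s ω}) :=
        sum_le_sum fun t ht ↦ sum_le_sum (hpair t ht)
    _ = #E * ∑ t ∈ I, #{ω ∈ E | p t ω} + (∑ t ∈ I, #{ω ∈ E | p t ω}) ^ 2 := by
        simp only [sum_add_distrib, sum_ite_eq, sum_ite_mem, inter_self, ← mul_sum, ← sum_mul, sq]

theorem card_filter_forall_not_mul_sum_le {E : Finset Ω} {I : Finset ι}
    (hcov : ∀ t ∈ I, ∀ s ∈ I, t ≠ s →
      #E * #{ω ∈ E | p t ω ∧ p s ω} ≤ #{ω ∈ E | p t ω} * #{ω ∈ E | p s ω}) :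
    #{ω ∈ E | ∀ t ∈ I, ¬ p t ω} * ∑ t ∈ I, #{ω ∈ E | p t ω} ≤ #E ^ 2 := by
  classical
  set M := ∑ t ∈ I, #{ω ∈ E | p t ω}
  set H := {ω ∈ E | ¬ ∀ t ∈ I, ¬ p t ω} with hH
  have hsplit : #{ω ∈ E | ∀ t ∈ I, ¬ p t ω} + #H = #E := card_filter_add_card_filter_not _
  have hfirst : ∑ ω ∈ H, #{t ∈ I | p t ω} = M := by
    refine Eq.trans ?_ (sum_card_bipartiteAbove_eq_sum_card_bipartiteBelow fun ω t ↦ p t ω)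
    refine sum_subset (filter_subset _ _) fun ω hω hωH ↦ ?_
    simpa [hH, hω, filter_eq_empty_iff] using hωH
  have hcs : M ^ 2 ≤ #H * ∑ ω ∈ E, #{t ∈ I | p t ω} ^ 2 := by
    rw [← hfirst]
    refine sq_sum_le_card_mul_sum_sq.trans (Nat.mul_le_mul_left _ ?_)
    exact sum_le_sum_of_subset (filter_subset _ _)
  have hsecond := card_mul_sum_card_filter_sq_le hcov
  rcases Nat.eq_zero_or_pos M with hM0 | hM0
  · simp [hM0]
  have hH_large : #E * M ≤ #H * (#E + M) := by
    refine Nat.le_of_mul_le_mul_right ?_ hM0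
    calc #E * M * M ≤ #E * (#H * ∑ ω ∈ E, #{t ∈ I | p t ω} ^ 2) := by
          rw [mul_assoc, ← sq]; gcongr
      _ = #H * (#E * ∑ ω ∈ E, #{t ∈ I | p t ω} ^ 2) := by ring
      _ ≤ #H * (#E * M + M ^ 2) := by gcongr
      _ = #H * (#E + M) * M := by ring
  nlinarith

end SecondMoment

section Factorial

theorem factorial_sub_two_le {n : ℕ} (hn : n ≠ 0) : (n - 2)! ≤ n ^ 2 * (n - 4)! := by
  rcases lt_or_ge n 4 with hn4 | hn4
  · interval_cases n <;> simp at hn ⊢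
  obtain ⟨m, rfl⟩ := Nat.exists_eq_add_of_le' hn4
  rw [Nat.add_sub_cancel, show m + 4 - 2 = m + 1 + 1 by lia, Nat.factorial_succ,
    Nat.factorial_succ, ← mul_assoc, sq]
  exact Nat.mul_le_mul_right _ (Nat.mul_le_mul (by lia) (by lia))

theorem sq_mul_factorial_sub_two_le {n : ℕ} (hn : 2 ≤ n) : n ^ 2 * (n - 2)! ≤ 2 * n ! := by
  obtain ⟨m, rfl⟩ := Nat.exists_eq_add_of_le' hn
  rw [Nat.add_sub_cancel, Nat.factorial_succ, Nat.factorial_succ, ← mul_assoc, ← mul_assoc]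
  exact Nat.mul_le_mul_right _ (by nlinarith)

theorem factorial_mul_mul_factorial_le_sq {n a b : ℕ} (ha : 2 * a + 3 ≤ n) (hb : 2 * b + 3 ≤ n) :
    (n - 2)! * (a * (a - 1) * (b * (b - 1)) * (n - 6)!) ≤ (a * b * (n - 4)!) ^ 2 := by
  rcases lt_or_ge n 6 with hn | hn
  · have ha1 : a - 1 = 0 := by lia
    simp [ha1]
  obtain ⟨m, rfl⟩ := Nat.exists_eq_add_of_le' hn
  have ha' : (a - 1) * (m + 4) ≤ a * (m + 2) := by rw [Nat.sub_one_mul]; grind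
  have hb' : (b - 1) * (m + 3) ≤ b * (m + 1) := by rw [Nat.sub_one_mul]; grind
  simp only [Nat.add_sub_cancel, show m + 6 - 2 = m + 4 by lia, show m + 6 - 4 = m + 2 by lia,
    Nat.factorial_succ]
  calc _ = a * b * (m + 2) * (m + 1) * m ! ^ 2 * (((a - 1) * (m + 4)) * ((b - 1) * (m + 3))) := by
        ring
    _ ≤ a * b * (m + 2) * (m + 1) * m ! ^ 2 * ((a * (m + 2)) * (b * (m + 1))) := by gcongr
    _ = _ := by ring

end Factorial

section Counting

variable {α : Type*} [DecidableEq α] {s : Finset α} {σ : Equiv.Perm α}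

theorem apply_eq_self_of_mem_permsOfFinset (hσ : σ ∈ permsOfFinset s) {a : α} (ha : a ∉ s) :
    σ a = a :=
  not_imp_comm.1 (mem_perms_of_finset_iff.1 hσ) ha

theorem apply_mem_iff_of_mem_permsOfFinset (hσ : σ ∈ permsOfFinset s) {a : α} :
    σ a ∈ s ↔ a ∈ s := by
  by_cases ha : σ a = a
  · rw [ha]
  · have ha' : σ (σ a) ≠ σ a := σ.injective.ne ha
    simp only [mem_perms_of_finset_iff.1 hσ ha, mem_perms_of_finset_iff.1 hσ ha']

theorem swap_mul_mem_permsOfFinset_erase {a b : α} (hσ : σ ∈ permsOfFinset s) (hab : σ a = b) :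
    Equiv.swap a b * σ ∈ permsOfFinset (s.erase a) := by
  have hinj := σ.injective
  simp only [mem_perms_of_finset_iff, Equiv.Perm.mul_apply] at hσ ⊢
  grind

theorem swap_mul_mem_permsOfFinset {a b : α} (ha : a ∈ s) (hb : b ∈ s)
    (hσ : σ ∈ permsOfFinset (s.erase a)) : Equiv.swap a b * σ ∈ permsOfFinset s := by
  simp only [mem_perms_of_finset_iff, Equiv.Perm.mul_apply] at hσ ⊢
  grind

theorem card_permsOfFinset_map_eq {l l' : List α} (hl : l.Nodup) (hl' : l'.Nodup)
    (hls : ∀ a ∈ l, a ∈ s) (hls' : ∀ a ∈ l', a ∈ s) (hlen : l.length = l'.length) :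
    #((permsOfFinset s).filter fun σ : Equiv.Perm α ↦ l.map σ = l') = (#s - l.length)! := by
  induction l generalizing s l' with
  | nil => simp [List.length_eq_zero_iff.1 hlen.symm, card_perms_of_finset]
  | cons a l ih =>
    obtain - | ⟨b, l'⟩ := l'
    · simp at hlen
    simp only [List.nodup_cons, List.forall_mem_cons, List.length_cons,
      Nat.add_right_cancel_iff] at hl hl' hls hls' hlen
    -- Composing with `swap a b` turns `σ a = b` into `σ a = a`: a permutation of `s.erase a`.
    have hrec := ih (s := s.erase a) (l' := l'.map (Equiv.swap a b)) hl.2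
      (hl'.2.map (Equiv.injective _)) (by grind) (by grind)
      (by simpa using hlen)
    rw [card_erase_of_mem hls.1, Nat.sub_sub, add_comm 1] at hrec
    rw [List.length_cons, ← hrec]
    refine card_nbij' (Equiv.swap a b * ·) (Equiv.swap a b * ·) (fun σ hσ ↦ ?_) (fun σ hσ ↦ ?_)
      (by simp [Set.LeftInvOn]) (by simp [Set.RightInvOn, Set.LeftInvOn])
    · simp only [coe_filter, Set.mem_ofPred_eq, List.map_cons, List.cons.injEq] at hσ ⊢
      obtain ⟨hσs, hab, rfl⟩ := hσ
      exact ⟨swap_mul_mem_permsOfFinset_erase hσs hab, by simp⟩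
    · simp only [coe_filter, Set.mem_ofPred_eq, List.map_cons, List.cons.injEq] at hσ ⊢
      obtain ⟨hσs, hmap⟩ := hσ
      have hσa : σ a = a := apply_eq_self_of_mem_permsOfFinset hσs (notMem_erase a s)
      refine ⟨swap_mul_mem_permsOfFinset hls.1 hls'.1 hσs, by simp [hσa], ?_⟩
      have hinv : Function.Involutive (Equiv.swap a b) := Equiv.swap_apply_self a b
      rw [Equiv.Perm.coe_mul, ← List.map_map, hmap, List.map_map, hinv.comp_self, List.map_id]

theorem card_permsOfFinset_map_eq_le {l l' : List α} (hl : l.Nodup) (hls' : ∀ a ∈ l', a ∈ s) :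
    #((permsOfFinset s).filter fun σ : Equiv.Perm α ↦ l.map σ = l') ≤ (#s - l.length)! := by
  rcases eq_empty_or_nonempty ((permsOfFinset s).filter fun σ : Equiv.Perm α ↦ l.map σ = l')
    with h | ⟨τ, hτ⟩
  · simp only [h, card_empty, zero_le]
  obtain ⟨hτs, rfl⟩ := mem_filter.1 hτ
  refine (card_permsOfFinset_map_eq hl (hl.map τ.injective) (fun a ha ↦ ?_) hls' (by simp)).le
  exact (apply_mem_iff_of_mem_permsOfFinset hτs).1 (hls' _ (List.mem_map_of_mem ha))

theorem card_permsOfFinset_map_mem {l : List α} {Y : Finset (List α)} (hl : l.Nodup)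
    (hls : ∀ a ∈ l, a ∈ s)
    (hY : ∀ l' ∈ Y, l'.Nodup ∧ (∀ a ∈ l', a ∈ s) ∧ l.length = l'.length) :
    #((permsOfFinset s).filter fun σ : Equiv.Perm α ↦ l.map σ ∈ Y) =
      #Y * (#s - l.length)! := by
  rw [card_eq_sum_card_fiberwise (f := fun σ : Equiv.Perm α ↦ l.map σ) (t := Y)
    (by simp [Set.MapsTo])]
  refine sum_const_nat fun l' hl' ↦ ?_
  obtain ⟨hnodup, hmem, hlen⟩ := hY l' hl'
  rw [filter_filter, ← card_permsOfFinset_map_eq hl hnodup hls hmem hlen]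
  congr 1
  grind

theorem card_permsOfFinset_map_mem_le {l : List α} {Y : Finset (List α)} (hl : l.Nodup)
    (hY : ∀ l' ∈ Y, ∀ a ∈ l', a ∈ s) :
    #((permsOfFinset s).filter fun σ : Equiv.Perm α ↦ l.map σ ∈ Y) ≤
      #Y * (#s - l.length)! := by
  rw [card_eq_sum_card_fiberwise (f := fun σ : Equiv.Perm α ↦ l.map σ) (t := Y)
    (by simp [Set.MapsTo])]
  refine sum_le_card_nsmul _ _ _ fun l' hl' ↦ ?_
  refine (card_le_card ?_).trans (card_permsOfFinset_map_eq_le hl (hY l' hl'))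
  exact filter_subset_filter _ (filter_subset _ _)

theorem card_permsOfFinset_eq_and_eq {i j u v : α} (hij : i ≠ j) (huv : u ≠ v)
    (hi : i ∈ s) (hj : j ∈ s) (hu : u ∈ s) (hv : v ∈ s) :
    #{σ ∈ permsOfFinset s | σ i = u ∧ σ j = v} = (#s - 2)! := by
  simpa using card_permsOfFinset_map_eq (s := s) (l := [i, j]) (l' := [u, v])
    (by simpa) (by simpa) (by simp [*]) (by simp [*]) rfl

theorem card_permsOfFinset_eq_and_eq_le {x y u v : α} (hxy : x ≠ y) (hu : u ∈ s) (hv : v ∈ s) :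
    #{σ ∈ permsOfFinset s | σ x = u ∧ σ y = v} ≤ (#s - 2)! := by
  simpa using card_permsOfFinset_map_eq_le (s := s) (l := [x, y]) (l' := [u, v])
    (by simpa) (by simp [*])

theorem card_permsOfFinset_exists_eq_and_eq_le {ι : Type*} (P : Finset ι) {x y u v : ι → α}
    (hxy : ∀ p ∈ P, x p ≠ y p) (hu : ∀ p ∈ P, u p ∈ s) (hv : ∀ p ∈ P, v p ∈ s) :
    #{σ ∈ permsOfFinset s | ∃ p ∈ P, σ (x p) = u p ∧ σ (y p) = v p} ≤ #P * (#s - 2)! := by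
  classical
  have hunion : {σ ∈ permsOfFinset s | ∃ p ∈ P, σ (x p) = u p ∧ σ (y p) = v p} =
      P.biUnion fun p ↦ {σ ∈ permsOfFinset s | σ (x p) = u p ∧ σ (y p) = v p} := by
    ext σ
    simp only [mem_filter, mem_biUnion]
    grind
  rw [hunion]
  exact card_biUnion_le_card_mul _ _ _ fun p hp ↦
    card_permsOfFinset_eq_and_eq_le (hxy p hp) (hu p hp) (hv p hp)

variable {i j u v : α} {S T : Finset α}

theorem card_permsOfFinset_eq_and_mem {a b : α} (hpos : [i, j, a, b].Nodup)
    (hs : ∀ x ∈ [i, j, a, b], x ∈ s) (huv : u ≠ v) (hu : u ∈ s) (hv : v ∈ s) (hST : Disjoint S T)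
    (hS : S ⊆ s \ {u, v}) (hT : T ⊆ s \ {u, v}) :
    #{σ ∈ permsOfFinset s | (σ i = u ∧ σ j = v) ∧ σ a ∈ S ∧ σ b ∈ T} =
      #S * #T * (#s - 4)! := by
  set Y := (S ×ˢ T).image fun c ↦ [u, v, c.1, c.2] with hY
  have hcard : #Y = #S * #T := by
    rw [hY, card_image_of_injective _ fun c d h ↦ by simpa [Prod.ext_iff] using h, card_product]
  rw [← hcard]
  refine Eq.trans ?_ (card_permsOfFinset_map_mem (Y := Y) hpos hs ?_)
  · congr 1
    ext σ
    simp only [hY, List.map_cons, List.map_nil, mem_filter, mem_image, mem_product, Prod.exists]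
    grind
  · simp only [hY, mem_image, mem_product, Prod.exists]
    rintro _ ⟨c, d, ⟨hc, hd⟩, rfl⟩
    have hcd := disjoint_iff_ne.1 hST c hc d hd
    have hc := hS hc
    have hd := hT hd
    simp only [mem_sdiff, mem_insert, mem_singleton, not_or] at hc hd
    simp [huv, hu, hv, hc, hd, hcd, Ne.symm hc.2.1, Ne.symm hc.2.2, Ne.symm hd.2.1, Ne.symm hd.2.2]

theorem card_permsOfFinset_eq_and_mem_and_mem_le {a b a' b' : α} (hpos : [i, j, a, b, a', b'].Nodup)
    (hu : u ∈ s) (hv : v ∈ s) (hS : S ⊆ s) (hT : T ⊆ s) :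
    #{σ ∈ permsOfFinset s |
        (σ i = u ∧ σ j = v) ∧ (σ a ∈ S ∧ σ b ∈ T) ∧ σ a' ∈ S ∧ σ b' ∈ T} ≤
      #S.offDiag * #T.offDiag * (#s - 6)! := by
  set Y := (S.offDiag ×ˢ T.offDiag).image fun c ↦ [u, v, c.1.1, c.2.1, c.1.2, c.2.2] with hY
  have hcard : #Y = #S.offDiag * #T.offDiag := by
    rw [hY, card_image_of_injective _ fun c d h ↦ by grind, card_product]
  rw [← hcard]
  refine (card_le_card fun σ hσ ↦ ?_).trans (card_permsOfFinset_map_mem_le (Y := Y) hpos ?_)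
  · simp only [mem_filter] at hσ ⊢
    obtain ⟨hσs, ⟨rfl, rfl⟩, ⟨ha, hb⟩, ha', hb'⟩ := hσ
    have haa' : σ a ≠ σ a' := σ.injective.ne (by grind)
    have hbb' : σ b ≠ σ b' := σ.injective.ne (by grind)
    exact ⟨hσs, mem_image.2 ⟨((σ a, σ a'), (σ b, σ b')), by simp [*], rfl⟩⟩
  · simp only [hY, mem_image, mem_product, mem_offDiag, Prod.exists]
    rintro _ ⟨c, c', d, d', ⟨⟨hc, hc', -⟩, hd, hd', -⟩, rfl⟩
    simp [hu, hv, hS hc, hS hc', hT hd, hT hd']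

theorem card_permsOfFinset_eq_and_forall_not_mem_mul_le {ι : Type*} {I : Finset ι} {a b : ι → α}
    (huv : u ≠ v) (hu : u ∈ s) (hv : v ∈ s) (hST : Disjoint S T)
    (hS : S ⊆ s \ {u, v}) (hT : T ⊆ s \ {u, v}) (hcardS : 2 * #S + 3 ≤ #s)
    (hcardT : 2 * #T + 3 ≤ #s) (hmem : ∀ t ∈ I, ∀ x ∈ [i, j, a t, b t], x ∈ s)
    (hpos : ∀ t ∈ I, [i, j, a t, b t].Nodup)
    (hpair : ∀ t ∈ I, ∀ t' ∈ I, t ≠ t' → [i, j, a t, b t, a t', b t'].Nodup) :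
    #{σ ∈ permsOfFinset s | (σ i = u ∧ σ j = v) ∧ ∀ t ∈ I, ¬ (σ (a t) ∈ S ∧ σ (b t) ∈ T)} *
      (#I * #S * #T) ≤ #s ^ 2 * (#s - 2)! := by
  rcases I.eq_empty_or_nonempty with rfl | ⟨t₀, ht₀⟩
  · simp
  have hcond : #{σ ∈ permsOfFinset s | σ i = u ∧ σ j = v} = (#s - 2)! :=
    card_permsOfFinset_eq_and_eq (by have := hpos t₀ ht₀; grind) huv (hmem t₀ ht₀ _ (by simp))
      (hmem t₀ ht₀ _ (by simp)) hu hv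
  have hhit : ∀ t ∈ I, #{σ ∈ {σ ∈ permsOfFinset s | σ i = u ∧ σ j = v} |
      σ (a t) ∈ S ∧ σ (b t) ∈ T} = #S * #T * (#s - 4)! := fun t ht ↦ by
    rw [filter_filter, card_permsOfFinset_eq_and_mem (hpos t ht) (hmem t ht) huv hu hv hST hS hT]
  have hsecond := card_filter_forall_not_mul_sum_le (I := I)
    (E := {σ ∈ permsOfFinset s | σ i = u ∧ σ j = v})
    (p := fun t σ ↦ σ (a t) ∈ S ∧ σ (b t) ∈ T) fun t ht t' ht' htt' ↦ by
      rw [hcond, hhit t ht, hhit t' ht', ← sq, filter_filter]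
      refine (Nat.mul_le_mul_left _ ?_).trans (factorial_mul_mul_factorial_le_sq hcardS hcardT)
      simp only [Nat.mul_sub_one, ← offDiag_card]
      exact card_permsOfFinset_eq_and_mem_and_mem_le (hpair t ht t' ht' htt') hu hv
        (hS.trans sdiff_subset) (hT.trans sdiff_subset)
  rw [hcond, sum_congr rfl hhit, sum_const, smul_eq_mul, filter_filter] at hsecond
  refine Nat.le_of_mul_le_mul_right ?_ (#s - 4).factorial_pos
  calc _ = _ := by ring
    _ ≤ (#s - 2)! ^ 2 := hsecond
    _ ≤ (#s - 2)! * (#s ^ 2 * (#s - 4)!) := by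
        rw [sq]
        gcongr
        exact factorial_sub_two_le (card_ne_zero_of_mem hu)
    _ = _ := by ring

end Counting

section Transfer

variable {α : Type*} [DecidableEq α] [Zero α] {s : Finset α} {R : (α → α) → Prop}

theorem setOf_bijOn_eq_image_indicator (hR : ∀ f g, Set.EqOn f g s → R f → R g) :
    {π : α → α | (Set.BijOn π s s ∧ ∀ x, x ∉ (s : Set α) → π x = 0) ∧ R π} =
      (fun σ : Equiv.Perm α ↦ Set.indicator s σ) '' {σ | σ ∈ permsOfFinset s ∧ R σ} := by
  ext π
  constructor
  · rintro ⟨⟨hbij, hzero⟩, hRπ⟩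
    set σ := Equiv.Perm.ofSubtype hbij.equiv with hσ
    have hσπ : Set.EqOn σ π s := fun x hx ↦ by rw [hσ, Equiv.Perm.ofSubtype_apply_of_mem _ hx]; rfl
    have hσs : σ ∈ permsOfFinset s := mem_perms_of_finset_iff.2 fun {x} hx ↦
      not_imp_comm.1 (Equiv.Perm.ofSubtype_apply_of_not_mem _) hx
    refine ⟨σ, ⟨hσs, hR _ _ hσπ.symm hRπ⟩, ?_⟩
    ext x
    by_cases hx : x ∈ (s : Set α)
    · exact (Set.indicator_of_mem hx _).trans (hσπ hx)
    · exact (Set.indicator_of_notMem hx _).trans (hzero x hx).symm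
  · rintro ⟨σ, ⟨hσs, hRσ⟩, rfl⟩
    have heq : Set.EqOn σ (Set.indicator s σ) s := (Set.eqOn_indicator).symm
    refine ⟨⟨?_, fun x hx ↦ Set.indicator_of_notMem hx _⟩, hR _ _ heq hRσ⟩
    exact (σ.bijOn fun x ↦ apply_mem_iff_of_mem_permsOfFinset hσs).congr heq

theorem injOn_indicator_permsOfFinset :
    Set.InjOn (fun σ : Equiv.Perm α ↦ Set.indicator s σ) {σ | σ ∈ permsOfFinset s} := by
  intro σ hσ τ hτ hστ
  ext x
  by_cases hx : x ∈ (s : Set α)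
  · simpa [hx] using congrFun hστ x
  · rw [apply_eq_self_of_mem_permsOfFinset hσ hx, apply_eq_self_of_mem_permsOfFinset hτ hx]

theorem ncard_setOf_bijOn_eq_card_filter [DecidablePred fun σ : Equiv.Perm α ↦ R σ]
    (hR : ∀ f g, Set.EqOn f g s → R f → R g) :
    {π : α → α | (Set.BijOn π s s ∧ ∀ x, x ∉ (s : Set α) → π x = 0) ∧ R π}.ncard =
      #((permsOfFinset s).filter fun σ : Equiv.Perm α ↦ R σ) := by
  rw [setOf_bijOn_eq_image_indicator hR,
    (injOn_indicator_permsOfFinset.mono fun σ hσ ↦ hσ.1).ncard_image,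
    ← Set.ncard_coe_finset, coe_filter]

end Transfer

theorem ncard_setOf_bijOn {α : Type*} [Zero α] {s : Finset α} :
    {π : α → α | Set.BijOn π s s ∧ ∀ x, x ∉ (s : Set α) → π x = 0}.ncard = (#s)! := by
  classical
  simpa [card_perms_of_finset] using
    ncard_setOf_bijOn_eq_card_filter (R := fun _ : α → α ↦ True) (s := s) (by simp)

section Extremes

/-- The favourable event at scale `M`, which is `k ^ (3 / 4)` in the theorem. It says that if `π`
takes the value `1` before the value `k`, then these two values lie at distance at least `M`, the
value following `1` exceeds `M`, the one preceding `k` is below `k - M`, and strictly between them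
`π` jumps from a value below `M` to one above `k - M`. -/
def ExtremesSpread (k : ℕ) (M : ℝ) (π : ℕ → ℕ) : Prop :=
  ∀ i j, 1 ≤ i → i ≤ k → 1 ≤ j → j ≤ k → π i = 1 → π j = k → i < j →
    (M < (π (i + 1) : ℝ) ∧ (π (j - 1) : ℝ) < (k : ℝ) - M ∧ M ≤ (j : ℝ) - (i : ℝ) ∧
      ∃ x, i + 1 < x ∧ x < j - 1 ∧ (π x : ℝ) < M ∧ (k : ℝ) - M < (π (x + 1) : ℝ))

theorem ExtremesSpread.congr {k : ℕ} {M : ℝ} {π π' : ℕ → ℕ} (h : ExtremesSpread k M π)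
    (heq : Set.EqOn π π' (Set.Icc 1 k)) : ExtremesSpread k M π' := by
  intro i j hi hik hj hjk hπi hπj hij
  rw [← heq ⟨hi, hik⟩] at hπi
  rw [← heq ⟨hj, hjk⟩] at hπj
  obtain ⟨hnext, hprev, hdist, x, hix, hxj, hx, hx'⟩ := h i j hi hik hj hjk hπi hπj hij
  rw [heq ⟨by lia, by lia⟩] at hnext hprev hx hx'
  exact ⟨hnext, hprev, hdist, x, hix, hxj, hx, hx'⟩

variable {k n : ℕ}

theorem card_small_after_one_le (hn : n ≤ k) :
    #{σ ∈ permsOfFinset (Icc 1 k) | ∃ i ∈ Ico 1 k, σ i = 1 ∧ σ (i + 1) ≤ n} ≤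
      k * n * (k - 2)! := by
  calc _ ≤ #{σ ∈ permsOfFinset (Icc 1 k) | ∃ p ∈ Icc 1 k ×ˢ Icc 1 n,
        σ p.1 = 1 ∧ σ (p.1 + 1) = p.2} := by
        refine card_le_card fun σ hσ ↦ ?_
        obtain ⟨hσs, i, hi, hσi, hσn⟩ := mem_filter.1 hσ
        have hnext := (apply_mem_iff_of_mem_permsOfFinset hσs (a := i + 1)).2 (by grind)
        exact mem_filter.2 ⟨hσs, (i, σ (i + 1)), by grind, hσi, rfl⟩
    _ ≤ #(Icc 1 k ×ˢ Icc 1 n) * (#(Icc 1 k) - 2)! :=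
        card_permsOfFinset_exists_eq_and_eq_le _ (by grind) (by grind) (by grind)
    _ = k * n * (k - 2)! := by simp

theorem card_large_before_max_le (hn : n < k) :
    #{σ ∈ permsOfFinset (Icc 1 k) | ∃ j ∈ Ioc 1 k, σ j = k ∧ k - σ (j - 1) ≤ n} ≤
      k * n * (k - 2)! := by
  calc _ ≤ #{σ ∈ permsOfFinset (Icc 1 k) | ∃ p ∈ Icc 1 k ×ˢ Icc 1 n,
        σ p.1 = k ∧ σ (p.1 - 1) = k - p.2} := by
        refine card_le_card fun σ hσ ↦ ?_
        obtain ⟨hσs, j, hj, hσj, hσn⟩ := mem_filter.1 hσ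
        have hprev := (apply_mem_iff_of_mem_permsOfFinset hσs (a := j - 1)).2 (by grind)
        have hne : σ (j - 1) ≠ k := hσj ▸ σ.injective.ne (by grind)
        exact mem_filter.2 ⟨hσs, (j, k - σ (j - 1)), by grind, hσj, by grind⟩
    _ ≤ #(Icc 1 k ×ˢ Icc 1 n) * (#(Icc 1 k) - 2)! :=
        card_permsOfFinset_exists_eq_and_eq_le _ (by grind) (by grind) (by grind)
    _ = k * n * (k - 2)! := by simp

theorem card_max_shortly_after_one_le :
    #{σ ∈ permsOfFinset (Icc 1 k) | ∃ i ∈ Icc 1 k, ∃ d ∈ Icc 1 n, σ i = 1 ∧ σ (i + d) = k} ≤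
      k * n * (k - 2)! := by
  calc _ ≤ #{σ ∈ permsOfFinset (Icc 1 k) | ∃ p ∈ Icc 1 k ×ˢ Icc 1 n,
        σ p.1 = 1 ∧ σ (p.1 + p.2) = k} := by
        refine card_le_card fun σ hσ ↦ ?_
        obtain ⟨hσs, i, hi, d, hd, hσ⟩ := mem_filter.1 hσ
        exact mem_filter.2 ⟨hσs, (i, d), mem_product.2 ⟨hi, hd⟩, hσ⟩
    _ ≤ #(Icc 1 k ×ˢ Icc 1 n) * (#(Icc 1 k) - 2)! :=
        card_permsOfFinset_exists_eq_and_eq_le _ (by grind) (by grind) (by grind)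
    _ = k * n * (k - 2)! := by simp

theorem card_fixed_ends_no_jump_mul_le {i j : ℕ} (hn : 6 ≤ n) (hnk : 2 * n < k) (hi : 1 ≤ i)
    (hij : i + n ≤ j) (hj : j ≤ k) :
    #{σ ∈ permsOfFinset (Icc 1 k) | (σ i = 1 ∧ σ j = k) ∧
        ∀ x ∈ Ioo (i + 1) (j - 1), ¬ (σ x < n ∧ k - σ (x + 1) < n)} * n ^ 3 ≤
      16 * k ^ 2 * (k - 2)! := by
  have hmain := card_permsOfFinset_eq_and_forall_not_mem_mul_le (s := Icc 1 k) (i := i) (j := j)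
    (u := 1) (v := k) (S := Ico 2 n) (T := Ioo (k - n) k) (I := range ((j - i - 2) / 2))
    (a := fun t ↦ i + 2 * t + 2) (b := fun t ↦ i + 2 * t + 3) (by lia) (by grind) (by grind)
    (disjoint_left.2 (by grind)) (by grind) (by grind)
    (by simp only [Nat.card_Ico, Nat.card_Icc]; lia)
    (by simp only [Nat.card_Ioo, Nat.card_Icc]; lia) (by grind) (by grind)
    (by
      simp only [mem_range, List.nodup_cons, List.mem_cons, List.not_mem_nil, List.nodup_nil]
      lia)
  simp only [card_range, Nat.card_Ico, Nat.card_Ioo, Nat.card_Icc, Nat.add_sub_cancel] at hmain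
  have hcube : n ^ 3 ≤ 16 * ((j - i - 2) / 2 * (n - 2) * (k - (k - n) - 1)) := by
    calc n ^ 3 = n * n * n := by ring
      _ ≤ (4 * ((j - i - 2) / 2)) * (2 * (n - 2)) * (2 * (k - (k - n) - 1)) := by gcongr <;> lia
      _ = _ := by ring
  calc _ ≤ _ * (16 * ((j - i - 2) / 2 * (n - 2) * (k - (k - n) - 1))) :=
        Nat.mul_le_mul (card_le_card fun σ hσ ↦ ?_) hcube
    _ = _ := mul_left_comm _ _ _
    _ ≤ 16 * _ := Nat.mul_le_mul_left _ hmain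
    _ = _ := by ring
  obtain ⟨hσs, hσ, hno⟩ := mem_filter.1 hσ
  refine mem_filter.2 ⟨hσs, hσ, fun t ht hhit ↦ hno (i + 2 * t + 2) ?_ ?_⟩
  all_goals grind

theorem card_no_jump_mul_le (hn : 6 ≤ n) (hnk : 2 * n < k) :
    #{σ ∈ permsOfFinset (Icc 1 k) | ∃ i ∈ Icc 1 k, ∃ j ∈ Icc (i + n) k, (σ i = 1 ∧ σ j = k) ∧
        ∀ x ∈ Ioo (i + 1) (j - 1), ¬ (σ x < n ∧ k - σ (x + 1) < n)} * n ^ 3 ≤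
      16 * k ^ 4 * (k - 2)! := by
  classical
  set P := {p ∈ Icc 1 k ×ˢ Icc 1 k | p.1 + n ≤ p.2}
  have hcardP : #P ≤ k ^ 2 := (card_filter_le _ _).trans_eq (by simp [sq])
  calc _ ≤ #(P.biUnion fun p ↦ {σ ∈ permsOfFinset (Icc 1 k) | (σ p.1 = 1 ∧ σ p.2 = k) ∧
          ∀ x ∈ Ioo (p.1 + 1) (p.2 - 1), ¬ (σ x < n ∧ k - σ (x + 1) < n)}) * n ^ 3 := by
        refine Nat.mul_le_mul_right _ (card_le_card fun σ hσ ↦ ?_)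
        obtain ⟨hσs, i, hi, j, hj, hσ⟩ := mem_filter.1 hσ
        exact mem_biUnion.2 ⟨(i, j), by grind, mem_filter.2 ⟨hσs, hσ⟩⟩
    _ ≤ _ := Nat.mul_le_mul_right _ card_biUnion_le
    _ ≤ #P * (16 * k ^ 2 * (k - 2)!) := by
        rw [sum_mul]
        exact sum_le_card_nsmul _ _ _ fun p hp ↦
          card_fixed_ends_no_jump_mul_le hn hnk (by grind) (by grind) (by grind)
    _ ≤ k ^ 2 * (16 * k ^ 2 * (k - 2)!) := Nat.mul_le_mul_right _ hcardP
    _ = _ := by ring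

theorem exists_of_not_extremesSpread {M : ℝ} {σ : Equiv.Perm ℕ}
    (h : ¬ ExtremesSpread k M σ) :
    (∃ i ∈ Ico 1 k, σ i = 1 ∧ σ (i + 1) ≤ ⌈M⌉₊) ∨
    (∃ j ∈ Ioc 1 k, σ j = k ∧ k - σ (j - 1) ≤ ⌈M⌉₊) ∨
    (∃ i ∈ Icc 1 k, ∃ d ∈ Icc 1 ⌈M⌉₊, σ i = 1 ∧ σ (i + d) = k) ∨
    ∃ i ∈ Icc 1 k, ∃ j ∈ Icc (i + ⌈M⌉₊) k, (σ i = 1 ∧ σ j = k) ∧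
      ∀ x ∈ Ioo (i + 1) (j - 1), ¬ (σ x < ⌈M⌉₊ ∧ k - σ (x + 1) < ⌈M⌉₊) := by
  by_contra! hgood
  obtain ⟨hnext, hprev, hdist, hjump⟩ := hgood
  refine h fun i j hi hik hj hjk hσi hσj hij ↦ ?_
  have hnext := hnext i (mem_Ico.2 ⟨hi, by lia⟩) hσi
  have hprev := hprev j (mem_Ioc.2 ⟨by lia, hjk⟩) hσj
  have hdist : ⌈M⌉₊ ≤ j - i := by
    by_contra! hlt
    exact hdist i (mem_Icc.2 ⟨hi, hik⟩) (j - i) (mem_Icc.2 (by lia)) hσi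
      (by rwa [Nat.add_sub_cancel' hij.le])
  obtain ⟨x, hx, hxn, hxk⟩ :=
    hjump i (mem_Icc.2 ⟨hi, hik⟩) j (mem_Icc.2 (by lia)) ⟨hσi, hσj⟩
  have hsub (a b : ℕ) : (a : ℝ) - b ≤ ((a - b : ℕ) : ℝ) := by
    rw [sub_le_iff_le_add]
    exact_mod_cast le_tsub_add
  refine ⟨(Nat.le_ceil M).trans_lt (Nat.cast_lt.2 hnext), ?_, ?_, x, (mem_Ioo.1 hx).1,
    (mem_Ioo.1 hx).2, Nat.lt_ceil.1 hxn, ?_⟩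
  · have hprev' : (⌈M⌉₊ : ℝ) + σ (j - 1) < k := by exact_mod_cast lt_tsub_iff_right.1 hprev
    linarith [Nat.le_ceil M]
  · exact (Nat.ceil_le.1 hdist).trans_eq (Nat.cast_sub hij.le)
  · linarith [hsub k (σ (x + 1)), Nat.lt_ceil.1 hxk]

open scoped Classical in
theorem card_not_extremesSpread_mul_le {M : ℝ} (hM : 6 ≤ ⌈M⌉₊) (hMk : 2 * ⌈M⌉₊ < k) :
    #((permsOfFinset (Icc 1 k)).filter fun σ : Equiv.Perm ℕ ↦ ¬ ExtremesSpread k M σ) *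
      ⌈M⌉₊ ^ 3 ≤ (3 * k * ⌈M⌉₊ ^ 4 + 16 * k ^ 4) * (k - 2)! := by
  have hunion := card_le_card
    (monotone_filter_right (permsOfFinset (Icc 1 k)) fun (σ : Equiv.Perm ℕ) _ ↦
      exists_of_not_extremesSpread (k := k) (M := M) (σ := σ))
  simp only [filter_or] at hunion
  have hn : ⌈M⌉₊ < k := by lia
  have hjump := card_no_jump_mul_le hM hMk
  set D := #{σ ∈ permsOfFinset (Icc 1 k) | ∃ i ∈ Icc 1 k, ∃ j ∈ Icc (i + ⌈M⌉₊) k,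
    (σ i = 1 ∧ σ j = k) ∧ ∀ x ∈ Ioo (i + 1) (j - 1), ¬ (σ x < ⌈M⌉₊ ∧ k - σ (x + 1) < ⌈M⌉₊)}
  calc _ ≤ (k * ⌈M⌉₊ * (k - 2)! + (k * ⌈M⌉₊ * (k - 2)! + (k * ⌈M⌉₊ * (k - 2)! + D))) *
          ⌈M⌉₊ ^ 3 := by
        refine Nat.mul_le_mul_right _ (hunion.trans ?_)
        grw [card_union_le, card_union_le, card_union_le, card_small_after_one_le hn.le,
          card_large_before_max_le hn, card_max_shortly_after_one_le]
    _ = 3 * k * ⌈M⌉₊ ^ 4 * (k - 2)! + D * ⌈M⌉₊ ^ 3 := by ring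
    _ ≤ 3 * k * ⌈M⌉₊ ^ 4 * (k - 2)! + 16 * k ^ 4 * (k - 2)! := by gcongr
    _ = _ := by ring

open scoped Classical in
theorem card_not_extremesSpread_le {M : ℝ} (hM : 5 < M) (hMk : 4 * M < k) :
    (#((permsOfFinset (Icc 1 k)).filter fun σ : Equiv.Perm ℕ ↦ ¬ ExtremesSpread k M σ) : ℝ) ≤
      32 * (M / k + k ^ 2 / M ^ 3) * k ! := by
  have hceil : (⌈M⌉₊ : ℝ) < M + 1 := Nat.ceil_lt_add_one (by linarith)
  have hle : M ≤ ⌈M⌉₊ := Nat.le_ceil M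
  have hk0 : (0 : ℝ) < k := by linarith
  have hbad := card_not_extremesSpread_mul_le (k := k) (M := M)
    (Nat.lt_ceil.2 (by exact_mod_cast hM)) (by exact_mod_cast (show (2 : ℝ) * ⌈M⌉₊ < k by linarith))
  have hfact := sq_mul_factorial_sub_two_le (n := k) (by
    exact_mod_cast (show (2 : ℝ) ≤ k by linarith))
  set B := #((permsOfFinset (Icc 1 k)).filter fun σ : Equiv.Perm ℕ ↦ ¬ ExtremesSpread k M σ)
  set N := ⌈M⌉₊
  have hN0 : (0 : ℝ) < N := by linarith
  have hbad' : (B : ℝ) * N ^ 3 * k ^ 2 ≤ (3 * k * N ^ 4 + 16 * k ^ 4) * (2 * k !) := by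
    exact_mod_cast show B * N ^ 3 * k ^ 2 ≤ (3 * k * N ^ 4 + 16 * k ^ 4) * (2 * k !) from calc
      B * N ^ 3 * k ^ 2 ≤ (3 * k * N ^ 4 + 16 * k ^ 4) * (k - 2)! * k ^ 2 := by gcongr
      _ = (3 * k * N ^ 4 + 16 * k ^ 4) * (k ^ 2 * (k - 2)!) := by ring
      _ ≤ _ := by gcongr
  calc (B : ℝ) ≤ (3 * k * N ^ 4 + 16 * k ^ 4) * (2 * k !) / (N ^ 3 * k ^ 2) := by
        rw [le_div_iff₀ (by positivity), ← mul_assoc]; exact hbad'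
    _ = (6 * (N / k) + 32 * (k ^ 2 / N ^ 3)) * k ! := by field_simp; ring
    _ ≤ (6 * (2 * M / k) + 32 * (k ^ 2 / M ^ 3)) * k ! := by gcongr; linarith
    _ ≤ 32 * (M / k + k ^ 2 / M ^ 3) * k ! := by
        gcongr
        have : 0 < M / k := by positivity
        linarith [mul_div_assoc 2 M (k : ℝ)]

theorem one_le_div_add_sq_div_cube {M : ℝ} (hM : 0 < M) (hk : 1 ≤ k) (h : ¬ (5 < M ∧ 4 * M < k)) :
    1 ≤ 125 * (M / k + k ^ 2 / M ^ 3) := by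
  have hk1 : (1 : ℝ) ≤ k := by exact_mod_cast hk
  rcases not_and_or.1 h with h | h
  · have hcube : 1 / 5 ^ 3 ≤ k ^ 2 / M ^ 3 := by
      gcongr
      · exact one_le_pow₀ hk1
      · exact not_lt.1 h
    linarith [show 0 ≤ M / k by positivity]
  · have hdiv : 1 / 4 ≤ M / k := by
      rw [div_le_div_iff₀ (by norm_num) (by linarith)]
      linarith
    linarith [show 0 ≤ k ^ 2 / M ^ 3 by positivity]

theorem stmt_12_general (k : ℕ) (hk : 1 ≤ k) (M : ℝ) (hM : 0 < M) :
    (1 - 125 * (M / k + k ^ 2 / M ^ 3)) *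
        (({π : ℕ → ℕ | Set.BijOn π (Set.Icc 1 k) (Set.Icc 1 k) ∧
            ∀ x, x ∉ Set.Icc 1 k → π x = 0}.ncard : ℝ)) ≤
      (({π : ℕ → ℕ | (Set.BijOn π (Set.Icc 1 k) (Set.Icc 1 k) ∧
          ∀ x, x ∉ Set.Icc 1 k → π x = 0) ∧ ExtremesSpread k M π}.ncard : ℝ)) := by
  classical
  by_cases hlarge : 5 < M ∧ 4 * M < k
  · rw [← coe_Icc, ncard_setOf_bijOn, ncard_setOf_bijOn_eq_card_filter fun f g heq h ↦
      h.congr (by rwa [← coe_Icc])]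
    have hsplit := card_filter_add_card_filter_not (s := permsOfFinset (Icc 1 k))
      fun σ : Equiv.Perm ℕ ↦ ExtremesSpread k M σ
    have hbad := card_not_extremesSpread_le hlarge.1 hlarge.2
    rw [card_perms_of_finset] at hsplit
    rw [Nat.card_Icc, Nat.add_sub_cancel] at hsplit ⊢
    have hsplit' : (#((permsOfFinset (Icc 1 k)).filter
        fun σ : Equiv.Perm ℕ ↦ ExtremesSpread k M σ) : ℝ) +
      #((permsOfFinset (Icc 1 k)).filter fun σ : Equiv.Perm ℕ ↦ ¬ ExtremesSpread k M σ) = k ! := by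
      exact_mod_cast hsplit
    linarith [show 0 ≤ (M / k + k ^ 2 / M ^ 3) * (k ! : ℝ) by positivity]
  · exact (mul_nonpos_of_nonpos_of_nonneg (sub_nonpos.2 (one_le_div_add_sq_div_cube hM hk hlarge))
      (Nat.cast_nonneg _)).trans (Nat.cast_nonneg _)

end Extremes

theorem rpow_div_add_sq_div_rpow_cube {x : ℝ} (hx : 0 < x) :
    x ^ ((3 : ℝ) / 4) / x + x ^ 2 / (x ^ ((3 : ℝ) / 4)) ^ 3 = 2 * x ^ (-(1 : ℝ) / 4) := by
  have h₁ : x ^ ((3 : ℝ) / 4) / x = x ^ (-(1 : ℝ) / 4) := by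
    rw [← Real.rpow_sub_one hx.ne']; norm_num
  have h₂ : x ^ 2 / (x ^ ((3 : ℝ) / 4)) ^ 3 = x ^ (-(1 : ℝ) / 4) := by
    rw [← Real.rpow_mul_natCast hx.le, ← Real.rpow_natCast x 2, ← Real.rpow_sub hx]; norm_num
  rw [h₁, h₂, two_mul]

/-- For a uniformly random permutation `π` of `{1,…,k}` (modelled as the bijections of
`Icc 1 k` that vanish outside), with probability `1 - O(k^{-1/4})` the following holds:
whenever `π i = 1`, `π j = k` and `i < j`, we have `π (i+1) > k^{3/4}`,
`π (j-1) < k - k^{3/4}`, `j - i ≥ k^{3/4}`, and there is `i+1 < x < j-1` with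
`π x < k^{3/4}` and `π (x+1) > k - k^{3/4}`. -/
theorem stmt_12 :
    ∃ C : ℝ, 0 < C ∧ ∀ k : ℕ, 1 ≤ k →
      (1 - C * (k : ℝ) ^ (-(1 : ℝ) / 4)) *
        (({π : ℕ → ℕ | Set.BijOn π (Set.Icc 1 k) (Set.Icc 1 k) ∧
            ∀ x, x ∉ Set.Icc 1 k → π x = 0}.ncard : ℝ))
      ≤ (({π : ℕ → ℕ | (Set.BijOn π (Set.Icc 1 k) (Set.Icc 1 k) ∧
            ∀ x, x ∉ Set.Icc 1 k → π x = 0) ∧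
          ∀ i j, 1 ≤ i → i ≤ k → 1 ≤ j → j ≤ k → π i = 1 → π j = k → i < j →
            ((k : ℝ) ^ ((3 : ℝ) / 4) < (π (i + 1) : ℝ) ∧
             (π (j - 1) : ℝ) < (k : ℝ) - (k : ℝ) ^ ((3 : ℝ) / 4) ∧
             (k : ℝ) ^ ((3 : ℝ) / 4) ≤ (j : ℝ) - (i : ℝ) ∧
             ∃ x, i + 1 < x ∧ x < j - 1 ∧ (π x : ℝ) < (k : ℝ) ^ ((3 : ℝ) / 4) ∧
               (k : ℝ) - (k : ℝ) ^ ((3 : ℝ) / 4) < (π (x + 1) : ℝ))}.ncard : ℝ)) := by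
  refine ⟨125 * 2, by norm_num, fun k hk ↦ ?_⟩
  have hk0 : (0 : ℝ) < k := by exact_mod_cast hk
  have hmain := stmt_12_general k hk ((k : ℝ) ^ ((3 : ℝ) / 4)) (by positivity)
  rw [rpow_div_add_sq_div_rpow_cube hk0, ← mul_assoc] at hmain
  exact hmain
end
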